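/- Let 1 < δ < 2, let q ≥ 2 be an integer and μ ≤ 2−δ a real number. Let b, c, f : [0,1] → ℝ belong to C^{q,μ}(0,1], assume c(x) ≥ 0 for all x ∈ [0,1], let α₁ ≥ 0 and α₀ ≥ 1/(δ−1), and let γ₀, γ₁ ∈ ℝ. Then the boundary value problem −D*^δ u(x) + b(x) u'(x) + c(x) u(x) = f(x) for x ∈ (0,1), with u(0) − α₀ u'(0) = γ₀ and u(1) + α₁ u'(1) = γ₁, has a solution u that is continuously differentiable on [0,1] and (q+1)-times continuously differentiable on (0,1], and there exists a constant C such that for all 0 < x ≤ 1: |u^{(i)}(x)| ≤ C for i = 0, 1, and |u^{(i)}(x)| ≤ C x^{δ−i} for i = 2, 3, …, q+1. Moreover u is the unique solution among all functions g that are continuously differentiable on [0,1], twice continuously differentiable on (0,1], and satisfy |g''(x)| ≤ C' x^{−θ} on (0,1] for some constants C' > 0 and θ ∈ (0,1). -/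

import Mathlib

/-- The Caputo fractional derivative of order `δ ∈ (1,2)` of `g`, using derivatives
within `[0,1]`:  `D*^δ g (x) = (1/Γ(2-δ)) ∫₀ˣ (x-t)^(1-δ) g''(t) dt`. -/
noncomputable def caputoW (δ : ℝ) (g : ℝ → ℝ) (x : ℝ) : ℝ :=
  (1 / Real.Gamma (2 - δ)) *
    ∫ t in (0:ℝ)..x, (x - t) ^ (1 - δ) *
      derivWithin (derivWithin g (Set.Icc 0 1)) (Set.Icc 0 1) t

/-- The class `C^{q,ν}(0,1]`: continuous functions on `[0,1]` that are `q`-times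
continuously differentiable on `(0,1]`, with `|y⁽ⁱ⁾(x)| ≤ C`, `C(1+|ln x|)` or
`C x^{1−ν−i}` according as `i < 1−ν`, `i = 1−ν` or `i > 1−ν`, for `1 ≤ i ≤ q`. -/
def CqNu (q : ℕ) (ν : ℝ) (y : ℝ → ℝ) : Prop :=
  ContinuousOn y (Set.Icc 0 1) ∧ ContDiffOn ℝ q y (Set.Ioc 0 1) ∧
  ∃ C : ℝ, ∀ i : ℕ, 1 ≤ i → i ≤ q → ∀ x ∈ Set.Ioc (0:ℝ) 1,
    (((i:ℝ) < 1 - ν) → |iteratedDerivWithin i y (Set.Icc 0 1) x| ≤ C) ∧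
    (((i:ℝ) = 1 - ν) →
      |iteratedDerivWithin i y (Set.Icc 0 1) x| ≤ C * (1 + |Real.log x|)) ∧
    ((1 - ν < (i:ℝ)) →
      |iteratedDerivWithin i y (Set.Icc 0 1) x| ≤ C * x ^ (1 - ν - i))

/-!
Write `w = u'`. Integrating the equation `δ - 1` times turns it into a Volterra equation
`w = β + I^{δ-1} (b w + c u - f)`, where `u = η + I w`, for the initial data `u(0) = η`,
`u'(0) = β`. The operator on the right is a contraction for a suitable exponential (Bielecki)
weight, so each pair of initial data has exactly one solution, depending affinely on it.

Up to the factor `x ^ p`, the fractional integral `I^p` is an average over dilations, hence commutes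
with the Euler derivative `x d/dx`. Applying `x d/dx` to the Volterra equation therefore gives
another equation of the same kind, and `w = β + x ^ (δ-1) * z` where `z` has as many continuous
Euler derivatives as the coefficients. This is the asserted smoothness, with the weighted bounds.

For `f = 0` and data `η = α₀ ≥ 0`, `β = 1`, the derivative `w` stays positive: at a first zero of
`w` the Caputo derivative of order `δ - 1` of `w` would be negative, while the equation makes it
`c u ≥ 0`. So the boundary value at `1` is a strictly increasing affine function of `u'(0)`, and
shooting yields existence and uniqueness.
-/

open Filter MeasureTheory Real Set Topology

section FractionalIntegral

/-- The Riemann–Liouville fractional integral of order `p` based at `0`. -/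
noncomputable def fracIntegral (p : ℝ) (g : ℝ → ℝ) (x : ℝ) : ℝ :=
  1 / Gamma p * ∫ t in (0 : ℝ)..x, (x - t) ^ (p - 1) * g t

/-- The Erdélyi–Kober average of order `p`: the fractional integral with its scaling factor `x ^ p`
removed, so that it commutes with the Euler derivative `x d/dx`. For `p = 1` it is the mean of `g`
over `[0, x]`. -/
noncomputable def erdelyiKober (p : ℝ) (g : ℝ → ℝ) (x : ℝ) : ℝ :=
  1 / Gamma p * ∫ s in (0 : ℝ)..1, (1 - s) ^ (p - 1) * g (x * s)

variable {p q x T L A : ℝ} {g h : ℝ → ℝ}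

theorem fracIntegral_apply_zero : fracIntegral p g 0 = 0 := by
  simp [fracIntegral]

theorem fracIntegral_one : fracIntegral 1 g x = ∫ t in (0 : ℝ)..x, g t := by
  simp [fracIntegral]

theorem erdelyiKober_one : erdelyiKober 1 g x = ∫ s in (0 : ℝ)..1, g (x * s) := by
  simp [erdelyiKober]

theorem fracIntegral_eq_rpow_mul_erdelyiKober (hp : 0 < p) (hx : 0 ≤ x) :
    fracIntegral p g x = x ^ p * erdelyiKober p g x := by
  rcases hx.eq_or_lt with rfl | hx
  · rw [fracIntegral_apply_zero, zero_rpow hp.ne', zero_mul]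
  have scale : ∫ s in (0 : ℝ)..1, (x - x * s) ^ (p - 1) * g (x * s) =
      x ^ (p - 1) * ∫ s in (0 : ℝ)..1, (1 - s) ^ (p - 1) * g (x * s) := by
    rw [← intervalIntegral.integral_const_mul]
    refine intervalIntegral.integral_congr fun s hs => ?_
    rw [uIcc_of_le zero_le_one] at hs
    change (x - x * s) ^ (p - 1) * g (x * s) = x ^ (p - 1) * ((1 - s) ^ (p - 1) * g (x * s))
    rw [← mul_one_sub, mul_rpow hx.le (sub_nonneg.2 hs.2), mul_assoc]
  have subst := intervalIntegral.mul_integral_comp_mul_left (a := 0) (b := 1)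
    (f := fun t => (x - t) ^ (p - 1) * g t) x
  rw [scale, mul_zero, mul_one] at subst
  rw [fracIntegral, erdelyiKober, ← subst, ← mul_assoc x,
    ← rpow_one_add' hx.le (by simpa using hp.ne'),
    add_sub_cancel]
  ring

theorem fracIntegral_congr (hgh : EqOn g h (Icc 0 T)) (hx : x ∈ Icc 0 T) :
    fracIntegral p g x = fracIntegral p h x := by
  unfold fracIntegral
  congr 1
  refine intervalIntegral.integral_congr fun t ht => ?_
  rw [uIcc_of_le hx.1] at ht
  simp only [hgh ⟨ht.1, ht.2.trans hx.2⟩]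

theorem erdelyiKober_congr (hgh : EqOn g h (Icc 0 T)) (hx : x ∈ Icc 0 T) :
    erdelyiKober p g x = erdelyiKober p h x := by
  unfold erdelyiKober
  congr 1
  refine intervalIntegral.integral_congr fun s hs => ?_
  rw [uIcc_of_le zero_le_one] at hs
  simp only [hgh ⟨mul_nonneg hx.1 hs.1, (mul_le_of_le_one_right hx.1 hs.2).trans hx.2⟩]

theorem intervalIntegrable_sub_rpow (hp : 0 < p) (x : ℝ) :
    IntervalIntegrable (fun t => (x - t) ^ (p - 1)) volume 0 x := by
  have h : IntervalIntegrable (fun t : ℝ => t ^ (p - 1)) volume x 0 :=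
    intervalIntegral.intervalIntegrable_rpow' (by linarith)
  simpa using h.comp_sub_left x

theorem intervalIntegrable_sub_rpow_mul (hp : 0 < p) (hg : ContinuousOn g (Icc 0 T))
    (hx : x ∈ Icc 0 T) :
    IntervalIntegrable (fun t => (x - t) ^ (p - 1) * g t) volume 0 x :=
  (intervalIntegrable_sub_rpow hp x).mul_continuousOn <| by
    rw [uIcc_of_le hx.1]
    exact hg.mono (Icc_subset_Icc_right hx.2)

theorem continuousOn_comp_mul_left (hg : ContinuousOn g (Icc 0 T)) (hx : x ∈ Icc 0 T) :
    ContinuousOn (fun s => g (x * s)) (Icc 0 1) :=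
  hg.comp (by fun_prop) fun _ hs =>
    ⟨mul_nonneg hx.1 hs.1, (mul_le_of_le_one_right hx.1 hs.2).trans hx.2⟩

theorem intervalIntegrable_one_sub_rpow_mul (hp : 0 < p) (hg : ContinuousOn g (Icc 0 T))
    (hx : x ∈ Icc 0 T) :
    IntervalIntegrable (fun s => (1 - s) ^ (p - 1) * g (x * s)) volume 0 1 :=
  intervalIntegrable_sub_rpow_mul hp (continuousOn_comp_mul_left hg hx)
    (right_mem_Icc.2 zero_le_one)

theorem fracIntegral_add (hp : 0 < p) (hg : ContinuousOn g (Icc 0 T))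
    (hh : ContinuousOn h (Icc 0 T)) (hx : x ∈ Icc 0 T) :
    fracIntegral p (g + h) x = fracIntegral p g x + fracIntegral p h x := by
  simp only [fracIntegral, Pi.add_apply, mul_add, intervalIntegral.integral_add
    (intervalIntegrable_sub_rpow_mul hp hg hx) (intervalIntegrable_sub_rpow_mul hp hh hx)]

theorem fracIntegral_smul (r : ℝ) : fracIntegral p (r • g) x = r * fracIntegral p g x := by
  simp only [fracIntegral, Pi.smul_apply, smul_eq_mul, mul_left_comm _ r,
    intervalIntegral.integral_const_mul]

theorem fracIntegral_sub (hp : 0 < p) (hg : ContinuousOn g (Icc 0 T))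
    (hh : ContinuousOn h (Icc 0 T)) (hx : x ∈ Icc 0 T) :
    fracIntegral p (g - h) x = fracIntegral p g x - fracIntegral p h x := by
  simp only [fracIntegral, Pi.sub_apply, mul_sub, intervalIntegral.integral_sub
    (intervalIntegrable_sub_rpow_mul hp hg hx) (intervalIntegrable_sub_rpow_mul hp hh hx)]

theorem erdelyiKober_add (hp : 0 < p) (hg : ContinuousOn g (Icc 0 T))
    (hh : ContinuousOn h (Icc 0 T)) (hx : x ∈ Icc 0 T) :
    erdelyiKober p (g + h) x = erdelyiKober p g x + erdelyiKober p h x := by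
  simp only [erdelyiKober, Pi.add_apply, mul_add, intervalIntegral.integral_add
    (intervalIntegrable_one_sub_rpow_mul hp hg hx) (intervalIntegrable_one_sub_rpow_mul hp hh hx)]

theorem erdelyiKober_sub (hp : 0 < p) (hg : ContinuousOn g (Icc 0 T))
    (hh : ContinuousOn h (Icc 0 T)) (hx : x ∈ Icc 0 T) :
    erdelyiKober p (g - h) x = erdelyiKober p g x - erdelyiKober p h x := by
  simp only [erdelyiKober, Pi.sub_apply, mul_sub, intervalIntegral.integral_sub
    (intervalIntegrable_one_sub_rpow_mul hp hg hx) (intervalIntegrable_one_sub_rpow_mul hp hh hx)]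

theorem continuousOn_erdelyiKober (hp : 0 < p) (hg : ContinuousOn g (Icc 0 T)) :
    ContinuousOn (erdelyiKober p g) (Icc 0 T) := by
  obtain ⟨M, hM⟩ := isCompact_Icc.exists_bound_of_continuousOn hg
  refine continuousOn_const.mul fun x hx => ?_
  have maps : ∀ s ∈ uIoc (0 : ℝ) 1, MapsTo (fun y => y * s) (Icc 0 T) (Icc 0 T) :=
      fun s hs y hy => by
    rw [uIoc_of_le zero_le_one] at hs
    exact ⟨mul_nonneg hy.1 hs.1.le, (mul_le_of_le_one_right hy.1 hs.2).trans hy.2⟩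
  refine intervalIntegral.continuousWithinAt_of_dominated_interval
    (bound := fun s => (1 - s) ^ (p - 1) * M) ?_ ?_
    ((intervalIntegrable_sub_rpow hp 1).mul_const M) ?_
  · filter_upwards [self_mem_nhdsWithin] with y hy
    exact (intervalIntegrable_one_sub_rpow_mul hp hg hy).def'.aestronglyMeasurable
  · filter_upwards [self_mem_nhdsWithin] with y hy
    refine ae_of_all _ fun s hs => ?_
    have hs1 : 0 ≤ 1 - s := sub_nonneg.2 (by simpa using hs.2)
    rw [norm_mul, norm_of_nonneg (rpow_nonneg hs1 _)]
    exact mul_le_mul_of_nonneg_left (hM _ (maps s hs hy)) (rpow_nonneg hs1 _)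
  · refine ae_of_all _ fun s hs => continuousWithinAt_const.mul ?_
    exact (hg _ (maps s hs hx)).comp (f := fun y => y * s) (by fun_prop) (maps s hs)

theorem continuousOn_fracIntegral (hp : 0 < p) (hg : ContinuousOn g (Icc 0 T)) :
    ContinuousOn (fracIntegral p g) (Icc 0 T) :=
  ((continuous_rpow_const hp.le).continuousOn.mul (continuousOn_erdelyiKober hp hg)).congr
    fun _ hx => fracIntegral_eq_rpow_mul_erdelyiKober hp hx.1

theorem integral_rpow_mul_exp_neg_mul_le (hp : 0 < p) (hL : 0 < L) (hx : 0 ≤ x) :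
    ∫ s in (0 : ℝ)..x, s ^ (p - 1) * exp (-(L * s)) ≤ L ^ (-p) * Gamma p := by
  have integrable : IntegrableOn (fun s : ℝ => s ^ (p - 1) * exp (-(L * s))) (Ioi 0) := by
    simpa only [rpow_one, neg_mul] using
      integrableOn_rpow_mul_exp_neg_mul_rpow (s := p - 1) (by linarith) one_pos hL
  calc ∫ s in (0 : ℝ)..x, s ^ (p - 1) * exp (-(L * s))
      = ∫ s in Ioc 0 x, s ^ (p - 1) * exp (-(L * s)) := intervalIntegral.integral_of_le hx
    _ ≤ ∫ s in Ioi 0, s ^ (p - 1) * exp (-(L * s)) := by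
        refine setIntegral_mono_set integrable ?_ Ioc_subset_Ioi_self.eventuallyLE
        exact (ae_restrict_mem measurableSet_Ioi).mono fun s hs =>
          mul_nonneg (rpow_nonneg (le_of_lt hs) _) (exp_pos _).le
    _ = L ^ (-p) * Gamma p := by
        rw [integral_rpow_mul_exp_neg_mul_Ioi hp hL, one_div, inv_rpow hL.le, rpow_neg hL.le]

-- The Bielecki weight `exp (L * t)` makes the norm of the fractional integral decay like
-- `L ^ (-p)`.
theorem abs_fracIntegral_le_of_abs_le_exp (hp : 0 < p) (hL : 0 < L) (hx : 0 ≤ x)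
    (hg : ∀ t ∈ Icc 0 x, |g t| ≤ A * exp (L * t)) :
    |fracIntegral p g x| ≤ L ^ (-p) * A * exp (L * x) := by
  have hA : 0 ≤ A := by simpa using (abs_nonneg _).trans (hg 0 (left_mem_Icc.2 hx))
  have hΓ : 0 < Gamma p := Gamma_pos_of_pos hp
  have bound : |∫ t in (0 : ℝ)..x, (x - t) ^ (p - 1) * g t| ≤
      ∫ t in (0 : ℝ)..x, (x - t) ^ (p - 1) * (A * exp (L * t)) := by
    rw [← norm_eq_abs]
    refine intervalIntegral.norm_integral_le_of_norm_le hx (ae_of_all _ fun t ht => ?_)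
      ((intervalIntegrable_sub_rpow hp x).mul_continuousOn (g := fun t => A * exp (L * t))
        (by fun_prop))
    have hk : 0 ≤ (x - t) ^ (p - 1) := rpow_nonneg (sub_nonneg.2 ht.2) _
    rw [norm_mul, norm_of_nonneg hk]
    exact mul_le_mul_of_nonneg_left (hg t (Ioc_subset_Icc_self ht)) hk
  have reflect : ∫ t in (0 : ℝ)..x, (x - t) ^ (p - 1) * (A * exp (L * t)) =
      A * exp (L * x) * ∫ s in (0 : ℝ)..x, s ^ (p - 1) * exp (-(L * s)) := by
    have := intervalIntegral.integral_comp_sub_left (a := 0) (b := x)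
      (fun s => s ^ (p - 1) * exp (-(L * s))) x
    rw [sub_self, sub_zero] at this
    rw [← this, ← intervalIntegral.integral_const_mul]
    refine intervalIntegral.integral_congr fun t _ => ?_
    simp only [mul_sub, neg_sub, exp_sub]
    field_simp
  calc |fracIntegral p g x|
      ≤ 1 / Gamma p * (A * exp (L * x) * (L ^ (-p) * Gamma p)) := by
        rw [fracIntegral, abs_mul, abs_of_pos (one_div_pos.2 hΓ)]
        gcongr
        rw [reflect] at bound
        exact bound.trans (mul_le_mul_of_nonneg_left
          (integral_rpow_mul_exp_neg_mul_le hp hL hx) (by positivity))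
    _ = L ^ (-p) * A * exp (L * x) := by field_simp

theorem abs_erdelyiKober_one_le (hx : 0 ≤ x) (hg : ∀ t ∈ Icc 0 x, |g t| ≤ A) :
    |erdelyiKober 1 g x| ≤ A := by
  rw [erdelyiKober_one]
  simpa using intervalIntegral.norm_integral_le_of_norm_le_const (a := 0) (b := 1)
    (f := fun s => g (x * s)) (C := A) fun s hs => by
      rw [uIoc_of_le zero_le_one] at hs
      exact hg _ ⟨mul_nonneg hx hs.1.le, mul_le_of_le_one_right hx hs.2⟩

theorem integral_one_sub_rpow_mul_rpow (hp : 0 < p) (hq : 0 < q) :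
    ∫ s in (0 : ℝ)..1, (1 - s) ^ (p - 1) * s ^ (q - 1) = ProbabilityTheory.beta q p := by
  rw [ProbabilityTheory.beta_eq_betaIntegralReal q p hq hp, Complex.betaIntegral,
    ← Complex.reCLM_apply, ← ContinuousLinearMap.intervalIntegral_comp_comm]
  · refine intervalIntegral.integral_congr fun s hs => ?_
    rw [uIcc_of_le zero_le_one] at hs
    simp only [Complex.reCLM_apply]
    rw [← Complex.ofReal_one, ← Complex.ofReal_sub, ← Complex.ofReal_sub, ← Complex.ofReal_sub,
      ← Complex.ofReal_cpow hs.1, ← Complex.ofReal_cpow (sub_nonneg.2 hs.2), ← Complex.ofReal_mul,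
      Complex.ofReal_re, mul_comm]
  · exact Complex.betaIntegral_convergent (by simpa) (by simpa)

theorem fracIntegral_rpow {r : ℝ} (hp : 0 < p) (hr : 0 ≤ r) (hx : 0 ≤ x) :
    fracIntegral p (fun t => t ^ r) x = Gamma (r + 1) / Gamma (p + r + 1) * x ^ (p + r) := by
  have scale : ∫ s in (0 : ℝ)..1, (1 - s) ^ (p - 1) * (x * s) ^ r =
      x ^ r * ProbabilityTheory.beta (r + 1) p := by
    rw [← integral_one_sub_rpow_mul_rpow hp (by linarith), ← intervalIntegral.integral_const_mul]
    refine intervalIntegral.integral_congr fun s hs => ?_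
    rw [uIcc_of_le zero_le_one] at hs
    simp only [mul_rpow hx hs.1, add_sub_cancel_right]
    ring
  have hΓ : Gamma p ≠ 0 := (Gamma_pos_of_pos hp).ne'
  rw [fracIntegral_eq_rpow_mul_erdelyiKober hp hx, erdelyiKober, scale,
    rpow_add_of_nonneg hx hp.le hr,
    ProbabilityTheory.beta, add_comm _ p, ← add_assoc]
  field_simp

theorem fracIntegral_fracIntegral_polynomial (hp : 0 < p) (hq : 0 < q) (P : Polynomial ℝ)
    (hx : 0 ≤ x) :
    fracIntegral p (fracIntegral q fun t => P.eval t) x =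
      fracIntegral (p + q) (fun t => P.eval t) x := by
  have hxI : x ∈ Icc 0 x := right_mem_Icc.2 hx
  induction P using Polynomial.induction_on' with
  | add P Q hP hQ =>
    have cP := P.continuous.continuousOn (s := Icc 0 x)
    have cQ := Q.continuous.continuousOn (s := Icc 0 x)
    have eval_add : (fun t => (P + Q).eval t) = (fun t => P.eval t) + fun t => Q.eval t := by
      ext t
      simp
    rw [eval_add, fracIntegral_congr (fun t ht => fracIntegral_add hq cP cQ ht) hxI,
      fracIntegral_add (by positivity) cP cQ hxI, ← hP, ← hQ]
    exact fracIntegral_add hp (continuousOn_fracIntegral hq cP)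
      (continuousOn_fracIntegral hq cQ) hxI
  | monomial n a =>
    have monomial : ∀ r > 0, ∀ t ∈ Icc 0 x,
        fracIntegral r (fun t => (Polynomial.monomial n a).eval t) t =
          ((a * (Gamma (n + 1) / Gamma (r + n + 1))) • fun t : ℝ => t ^ (r + n)) t := by
      intro r hr t ht
      have eval_eq :
          (fun t => (Polynomial.monomial n a).eval t) = a • fun t : ℝ => t ^ (n : ℝ) := by
        ext t
        simp
      rw [eval_eq, fracIntegral_smul, fracIntegral_rpow hr n.cast_nonneg ht.1, ← mul_assoc]
      rfl
    have hΓ : Gamma (q + n + 1) ≠ 0 := (Gamma_pos_of_pos (by positivity)).ne'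
    rw [fracIntegral_congr (monomial q hq) hxI, monomial (p + q) (by positivity) x hxI,
      fracIntegral_smul, fracIntegral_rpow hp (by positivity) hx]
    simp only [Pi.smul_apply, smul_eq_mul, ← add_assoc]
    field_simp

theorem fracIntegral_fracIntegral (hp : 0 < p) (hq : 0 < q) (hg : ContinuousOn g (Icc 0 T))
    (hx : x ∈ Icc 0 T) : fracIntegral p (fracIntegral q g) x = fracIntegral (p + q) g x := by
  refine eq_of_abs_sub_le_all fun ε hε => ?_
  obtain ⟨P, hP⟩ := exists_polynomial_near_of_continuousOn 0 T g hg (ε / (2 * exp x))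
    (by positivity)
  set r : ℝ → ℝ := g - fun t => P.eval t with hr
  have cP : ContinuousOn (fun t => P.eval t) (Icc 0 T) := P.continuous.continuousOn
  have r_le : ∀ t ∈ Icc 0 T, |r t| ≤ ε / (2 * exp x) * exp (1 * t) := fun t ht => by
    rw [hr, Pi.sub_apply, abs_sub_comm]
    exact (hP t ht).le.trans
      (le_mul_of_one_le_right (by positivity) (one_le_exp (by simpa using ht.1)))
  have J_le : ∀ {s} {f : ℝ → ℝ}, 0 < s → (∀ t ∈ Icc 0 T, |f t| ≤ ε / (2 * exp x) * exp (1 * t)) →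
      ∀ t ∈ Icc 0 T, |fracIntegral s f t| ≤ ε / (2 * exp x) * exp (1 * t) := fun hs hf t ht => by
    simpa using abs_fracIntegral_le_of_abs_le_exp hs one_pos ht.1
      fun u hu => hf u ⟨hu.1, hu.2.trans ht.2⟩
  have split : fracIntegral p (fracIntegral q g) x - fracIntegral (p + q) g x =
      fracIntegral p (fracIntegral q r) x - fracIntegral (p + q) r x := by
    rw [hr, fracIntegral_congr (fun t ht => fracIntegral_sub hq hg cP ht) hx,
      ← Pi.sub_def, fracIntegral_sub hp (continuousOn_fracIntegral hq hg)
        (continuousOn_fracIntegral hq cP) hx, fracIntegral_sub (by positivity) hg cP hx,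
      fracIntegral_fracIntegral_polynomial hp hq P hx.1]
    ring
  calc |fracIntegral p (fracIntegral q g) x - fracIntegral (p + q) g x|
      ≤ |fracIntegral p (fracIntegral q r) x| + |fracIntegral (p + q) r x| := split ▸ abs_sub _ _
    _ ≤ ε / (2 * exp x) * exp (1 * x) + ε / (2 * exp x) * exp (1 * x) :=
        add_le_add (J_le hp (J_le hq r_le) x hx) (J_le (by positivity) r_le x hx)
    _ = ε := by
        field_simp
        norm_num

theorem hasDerivAt_fracIntegral_one (hg : ContinuousOn g (Icc 0 T)) (hx : x ∈ Ioo 0 T) :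
    HasDerivAt (fracIntegral 1 g) (g x) x := by
  rw [funext fun y => fracIntegral_one (g := g) (x := y)]
  have cont : ContinuousAt g x := hg.continuousAt (Icc_mem_nhds hx.1 hx.2)
  exact intervalIntegral.integral_hasDerivAt_right
    ((hg.mono (by rw [uIcc_of_le hx.1.le]; exact Icc_subset_Icc_right hx.2.le)).intervalIntegrable)
    (hg.stronglyMeasurableAtFilter_nhdsWithin measurableSet_Icc x |>.filter_mono
      (nhdsWithin_eq_nhds.2 (Icc_mem_nhds hx.1 hx.2)).ge) cont

theorem eqOn_of_eqOn_fracIntegral_one (hT : 0 < T) (hg : ContinuousOn g (Icc 0 T))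
    (hh : ContinuousOn h (Icc 0 T)) (heq : EqOn (fracIntegral 1 g) (fracIntegral 1 h) (Icc 0 T)) :
    EqOn g h (Icc 0 T) := by
  have interior : EqOn g h (Ioo 0 T) := fun x hx =>
    (hasDerivAt_fracIntegral_one hg hx).unique <|
      (hasDerivAt_fracIntegral_one hh hx).congr_of_eventuallyEq <|
        heq.eventuallyEq_of_mem (Icc_mem_nhds hx.1 hx.2)
  exact interior.of_subset_closure hg hh Ioo_subset_Icc_self (closure_Ioo hT.ne).ge

end FractionalIntegral

section EulerDerivative

/-- `HasEulerDeriv y z` says that `z` is the Euler derivative `x * y'` of `y` on the unit interval,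
where both functions are continuous up to `0`. The derivative is only required in the interior. -/
structure HasEulerDeriv (y z : ℝ → ℝ) : Prop where
  continuousOn : ContinuousOn y (Icc 0 1)
  continuousOn_deriv : ContinuousOn z (Icc 0 1)
  hasDerivAt : ∀ x ∈ Ioo (0 : ℝ) 1, HasDerivAt y (z x / x) x

/-- `EulerContDiff n y` says that `y` has `n` successive Euler derivatives, all of them continuous
on the closed unit interval. -/
def EulerContDiff : ℕ → (ℝ → ℝ) → Prop
  | 0, y => ContinuousOn y (Icc 0 1)
  | n + 1, y => ∃ z, HasEulerDeriv y z ∧ EulerContDiff n z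

variable {p s x : ℝ} {y z y₁ y₂ z₁ z₂ : ℝ → ℝ}

namespace HasEulerDeriv

protected theorem congr (h : HasEulerDeriv y z) (hy : EqOn y₁ y (Icc 0 1))
    (hz : EqOn z₁ z (Icc 0 1)) :
    HasEulerDeriv y₁ z₁ where
  continuousOn := h.continuousOn.congr hy
  continuousOn_deriv := h.continuousOn_deriv.congr hz
  hasDerivAt x hx := by
    rw [hz (Ioo_subset_Icc_self hx)]
    exact (h.hasDerivAt x hx).congr_of_eventuallyEq
      (hy.eventuallyEq_of_mem (Icc_mem_nhds hx.1 hx.2))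

protected theorem unique (h₁ : HasEulerDeriv y z₁) (h₂ : HasEulerDeriv y z₂) :
    EqOn z₁ z₂ (Icc 0 1) := by
  have interior : EqOn z₁ z₂ (Ioo 0 1) := fun x hx =>
    (div_left_inj' hx.1.ne').1 ((h₁.hasDerivAt x hx).unique (h₂.hasDerivAt x hx))
  exact interior.of_subset_closure h₁.continuousOn_deriv h₂.continuousOn_deriv Ioo_subset_Icc_self
    (closure_Ioo zero_ne_one).ge

protected theorem const (r : ℝ) : HasEulerDeriv (fun _ => r) 0 where
  continuousOn := continuousOn_const
  continuousOn_deriv := continuousOn_const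
  hasDerivAt x _ := by simpa using hasDerivAt_const x r

protected theorem add (h₁ : HasEulerDeriv y₁ z₁) (h₂ : HasEulerDeriv y₂ z₂) :
    HasEulerDeriv (y₁ + y₂) (z₁ + z₂) where
  continuousOn := h₁.continuousOn.add h₂.continuousOn
  continuousOn_deriv := h₁.continuousOn_deriv.add h₂.continuousOn_deriv
  hasDerivAt x hx :=
    ((h₁.hasDerivAt x hx).add (h₂.hasDerivAt x hx)).congr_deriv (add_div _ _ _).symm

protected theorem mul (h₁ : HasEulerDeriv y₁ z₁) (h₂ : HasEulerDeriv y₂ z₂) :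
    HasEulerDeriv (y₁ * y₂) (z₁ * y₂ + y₁ * z₂) where
  continuousOn := h₁.continuousOn.mul h₂.continuousOn
  continuousOn_deriv := (h₁.continuousOn_deriv.mul h₂.continuousOn).add
    (h₁.continuousOn.mul h₂.continuousOn_deriv)
  hasDerivAt x hx := ((h₁.hasDerivAt x hx).mul (h₂.hasDerivAt x hx)).congr_deriv <| by
    simp only [Pi.add_apply, Pi.mul_apply]
    ring

theorem hasDerivWithinAt (h : HasEulerDeriv y z) (hx : x ∈ Ioc (0 : ℝ) 1) :
    HasDerivWithinAt y (z x / x) (Icc 0 1) x := by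
  rcases hx.2.eq_or_lt with rfl | hx1
  swap
  · exact (h.hasDerivAt x ⟨hx.1, hx1⟩).hasDerivWithinAt
  have one_mem : (1 : ℝ) ∈ Icc (0 : ℝ) 1 := right_mem_Icc.2 zero_le_one
  have nhds : Ioo (0 : ℝ) 1 ∈ 𝓝[<] (1 : ℝ) := Ioo_mem_nhdsLT one_pos
  have lim : Tendsto (fun t => z t / t) (𝓝[<] 1) (𝓝 (z 1 / 1)) := by
    rw [← nhdsWithin_Ioo_eq_nhdsLT one_pos]
    exact ((h.continuousOn_deriv 1 one_mem).mono Ioo_subset_Icc_self).div continuousWithinAt_id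
      one_ne_zero
  refine (hasDerivWithinAt_Iic_of_tendsto_deriv (s := Ioo 0 1)
    (fun t ht => (h.hasDerivAt t ht).differentiableAt.differentiableWithinAt)
    ((h.continuousOn 1 one_mem).mono Ioo_subset_Icc_self) nhds
    (lim.congr' ?_)).mono Icc_subset_Iic_self
  filter_upwards [nhds] with t ht
  exact (h.hasDerivAt t ht).deriv.symm

theorem hasDerivWithinAt_rpow_mul (h : HasEulerDeriv y z) (s : ℝ) (hx : x ∈ Ioc (0 : ℝ) 1) :
    HasDerivWithinAt (fun t => t ^ s * y t) (x ^ (s - 1) * (s • y + z) x) (Icc 0 1) x := by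
  refine ((hasDerivAt_rpow_const (Or.inl hx.1.ne')).hasDerivWithinAt.mul
    (h.hasDerivWithinAt hx)).congr_deriv ?_
  rw [Pi.add_apply, Pi.smul_apply, smul_eq_mul, rpow_sub_one hx.1.ne']
  ring

theorem derivWithin_rpow_mul (h : HasEulerDeriv y z) (s : ℝ) :
    EqOn (derivWithin (fun x => x ^ s * y x) (Ioc 0 1)) (fun x => x ^ (s - 1) * (s • y + z) x)
      (Ioc 0 1) := fun x hx =>
  ((h.hasDerivWithinAt_rpow_mul s hx).mono Ioc_subset_Icc_self).derivWithin
    (uniqueDiffOn_Ioc 0 1 x hx)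

protected theorem rpow (hs : 0 ≤ s) : HasEulerDeriv (fun x => x ^ s) (s • fun x => x ^ s) where
  continuousOn := (continuous_rpow_const hs).continuousOn
  continuousOn_deriv := ((continuous_rpow_const hs).const_smul s).continuousOn
  hasDerivAt x hx := (hasDerivAt_rpow_const (Or.inl hx.1.ne')).congr_deriv <| by
    rw [rpow_sub_one hx.1.ne', Pi.smul_apply, smul_eq_mul, mul_div_assoc]

theorem hasDerivAt_erdelyiKober (h : HasEulerDeriv y z) (hp : 0 < p) (hx : x ∈ Ioo (0 : ℝ) 1) :
    HasDerivAt (erdelyiKober p y) (erdelyiKober p z x / x) x := by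
  obtain ⟨M, hM⟩ := isCompact_Icc.exists_bound_of_continuousOn h.continuousOn_deriv
  have hxI : x ∈ Icc (0 : ℝ) 1 := Ioo_subset_Icc_self hx
  have half_pos : 0 < x / 2 := half_pos hx.1
  have hM0 : 0 ≤ M := (norm_nonneg _).trans (hM x hxI)
  have deriv := (intervalIntegral.hasDerivAt_integral_of_dominated_loc_of_deriv_le
    (μ := volume) (a := 0) (b := 1) (x₀ := x) (F := fun x s => (1 - s) ^ (p - 1) * y (x * s))
    (F' := fun x s => (1 - s) ^ (p - 1) * (z (x * s) / x)) (s := Ioo (x / 2) 1)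
    (bound := fun s => (1 - s) ^ (p - 1) * (M / (x / 2)))
    (Ioo_mem_nhds (half_lt_self hx.1) hx.2) ?_
    (intervalIntegrable_one_sub_rpow_mul hp h.continuousOn hxI) ?_ ?_
    ((intervalIntegrable_sub_rpow hp 1).mul_const _) ?_).2.const_mul (1 / Gamma p)
  · refine deriv.congr_deriv ?_
    simp only [erdelyiKober, ← mul_div_assoc, intervalIntegral.integral_div]
  · filter_upwards [Ioo_mem_nhds hx.1 hx.2] with t ht
    exact (intervalIntegrable_one_sub_rpow_mul hp h.continuousOn
      (Ioo_subset_Icc_self ht)).def'.aestronglyMeasurable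
  · simpa only [mul_div_assoc] using ((intervalIntegrable_one_sub_rpow_mul hp
      h.continuousOn_deriv hxI).div_const x).def'.aestronglyMeasurable
  · refine ae_of_all _ fun s hs t ht => ?_
    rw [uIoc_of_le zero_le_one] at hs
    have ht0 : 0 < t := half_pos.trans ht.1
    have hk : 0 ≤ (1 - s) ^ (p - 1) := rpow_nonneg (sub_nonneg.2 hs.2) _
    rw [norm_mul, norm_of_nonneg hk, norm_div, norm_of_nonneg ht0.le]
    gcongr
    · exact hM _ ⟨mul_nonneg ht0.le hs.1.le, mul_le_one₀ ht.2.le hs.1.le hs.2⟩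
    · exact ht.1.le
  · refine ae_of_all _ fun s hs t ht => ?_
    rw [uIoc_of_le zero_le_one] at hs
    have ht0 : 0 < t := half_pos.trans ht.1
    have mem : t * s ∈ Ioo (0 : ℝ) 1 :=
      ⟨mul_pos ht0 hs.1, (mul_le_of_le_one_right ht0.le hs.2).trans_lt ht.2⟩
    refine (((h.hasDerivAt _ mem).comp t (hasDerivAt_mul_const s)).congr_deriv ?_).const_mul _
    rw [div_mul_eq_mul_div, mul_div_mul_right _ _ hs.1.ne']

protected theorem erdelyiKober (h : HasEulerDeriv y z) (hp : 0 < p) :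
    HasEulerDeriv (erdelyiKober p y) (erdelyiKober p z) where
  continuousOn := continuousOn_erdelyiKober hp h.continuousOn
  continuousOn_deriv := continuousOn_erdelyiKober hp h.continuousOn_deriv
  hasDerivAt _ := h.hasDerivAt_erdelyiKober hp

protected theorem fracIntegral (h : HasEulerDeriv y z) (hp : 0 < p) :
    HasEulerDeriv (fracIntegral p y) (fracIntegral p (p • y + z)) := by
  refine ((HasEulerDeriv.rpow hp.le).mul (h.erdelyiKober hp)).congr
    (fun x hx => fracIntegral_eq_rpow_mul_erdelyiKober hp hx.1) fun x hx => ?_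
  rw [fracIntegral_add hp (h.continuousOn.const_smul p) h.continuousOn_deriv hx, fracIntegral_smul,
    fracIntegral_eq_rpow_mul_erdelyiKober hp hx.1, fracIntegral_eq_rpow_mul_erdelyiKober hp hx.1,
    Pi.add_apply, Pi.mul_apply, Pi.mul_apply, Pi.smul_apply, smul_eq_mul, mul_assoc]

end HasEulerDeriv

theorem hasEulerDeriv_erdelyiKober_one (hy : ContinuousOn y (Icc 0 1)) :
    HasEulerDeriv (erdelyiKober 1 y) (y - erdelyiKober 1 y) where
  continuousOn := continuousOn_erdelyiKober one_pos hy
  continuousOn_deriv := hy.sub (continuousOn_erdelyiKober one_pos hy)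
  hasDerivAt x hx := by
    have eq_div : ∀ t > 0, erdelyiKober 1 y t = fracIntegral 1 y t / t := fun t ht => by
      rw [fracIntegral_eq_rpow_mul_erdelyiKober one_pos ht.le, rpow_one,
        mul_div_cancel_left₀ _ ht.ne']
    refine (((hasDerivAt_fracIntegral_one hy hx).div (hasDerivAt_id x)
      hx.1.ne').congr_of_eventuallyEq ?_).congr_deriv ?_
    · filter_upwards [Ioi_mem_nhds hx.1] with t ht using eq_div t ht
    · have hx0 : x ≠ 0 := hx.1.ne'
      rw [Pi.sub_apply, eq_div x hx.1]
      simp only [id_eq]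
      field_simp

theorem HasEulerDeriv.eqOn_erdelyiKober_one (h : HasEulerDeriv y z) :
    EqOn y (erdelyiKober 1 (y + z)) (Icc 0 1) := fun x hx => by
  have := (h.erdelyiKober one_pos).unique (hasEulerDeriv_erdelyiKober_one h.continuousOn) hx
  rw [erdelyiKober_add one_pos h.continuousOn h.continuousOn_deriv hx, this, Pi.sub_apply,
    add_sub_cancel]

namespace EulerContDiff

variable {n m : ℕ}

protected theorem continuousOn (h : EulerContDiff n y) : ContinuousOn y (Icc 0 1) := by
  cases n with
  | zero => exact h
  | succ n => exact h.choose_spec.1.continuousOn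

theorem of_succ (h : EulerContDiff (n + 1) y) : EulerContDiff n y := by
  induction n generalizing y with
  | zero => exact h.continuousOn
  | succ n ih =>
    obtain ⟨z, hz, hn⟩ := h
    exact ⟨z, hz, ih hn⟩

theorem of_le (h : EulerContDiff n y) (hmn : m ≤ n) : EulerContDiff m y := by
  induction hmn with
  | refl => exact h
  | step _ ih => exact ih h.of_succ

protected theorem const (r : ℝ) : EulerContDiff n fun _ => r := by
  induction n generalizing r with
  | zero => exact continuousOn_const
  | succ n ih => exact ⟨0, .const r, ih 0⟩

protected theorem add (h₁ : EulerContDiff n y₁) (h₂ : EulerContDiff n y₂) :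
    EulerContDiff n (y₁ + y₂) := by
  induction n generalizing y₁ y₂ with
  | zero => exact ContinuousOn.add h₁ h₂
  | succ n ih =>
    obtain ⟨z₁, hz₁, hn₁⟩ := h₁
    obtain ⟨z₂, hz₂, hn₂⟩ := h₂
    exact ⟨z₁ + z₂, hz₁.add hz₂, ih hn₁ hn₂⟩

protected theorem mul (h₁ : EulerContDiff n y₁) (h₂ : EulerContDiff n y₂) :
    EulerContDiff n (y₁ * y₂) := by
  induction n generalizing y₁ y₂ with
  | zero => exact ContinuousOn.mul h₁ h₂
  | succ n ih =>
    obtain ⟨z₁, hz₁, hn₁⟩ := id h₁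
    obtain ⟨z₂, hz₂, hn₂⟩ := id h₂
    exact ⟨z₁ * y₂ + y₁ * z₂, hz₁.mul hz₂, (ih hn₁ h₂.of_succ).add (ih h₁.of_succ hn₂)⟩

protected theorem smul (r : ℝ) (h : EulerContDiff n y) : EulerContDiff n (r • y) :=
  (EulerContDiff.const r).mul h

protected theorem fracIntegral (h : EulerContDiff n y) (hp : 0 < p) :
    EulerContDiff n (fracIntegral p y) := by
  induction n generalizing y with
  | zero => exact continuousOn_fracIntegral hp h
  | succ n ih =>
    obtain ⟨z, hz, hn⟩ := id h
    exact ⟨_, hz.fracIntegral hp, ih ((h.of_succ.smul p).add hn)⟩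

protected theorem erdelyiKober (h : EulerContDiff n y) (hp : 0 < p) :
    EulerContDiff n (erdelyiKober p y) := by
  induction n generalizing y with
  | zero => exact continuousOn_erdelyiKober hp h
  | succ n ih =>
    obtain ⟨z, hz, hn⟩ := h
    exact ⟨_, hz.erdelyiKober hp, ih hn⟩

theorem contDiffOn_rpow_mul (h : EulerContDiff n y) (s : ℝ) :
    ContDiffOn ℝ n (fun x => x ^ s * y x) (Ioc 0 1) := by
  induction n generalizing s y with
  | zero =>
    refine contDiffOn_zero.2 (ContinuousOn.mul (fun x hx => ?_) (h.mono Ioc_subset_Icc_self))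
    exact (continuousAt_rpow_const x s (Or.inl hx.1.ne')).continuousWithinAt
  | succ n ih =>
    obtain ⟨z, hz, hn⟩ := id h
    rw [Nat.cast_succ, contDiffOn_succ_iff_derivWithin (uniqueDiffOn_Ioc 0 1)]
    refine ⟨fun x hx => ?_, by simp, ?_⟩
    · exact ((hz.hasDerivWithinAt_rpow_mul s hx).mono Ioc_subset_Icc_self).differentiableWithinAt
    · exact (ih ((h.of_succ.smul s).add hn) (s - 1)).congr (hz.derivWithin_rpow_mul s)

theorem exists_abs_iteratedDerivWithin_rpow_mul_le (h : EulerContDiff n y) (s : ℝ) :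
    ∃ C, ∀ x ∈ Ioc (0 : ℝ) 1,
      |iteratedDerivWithin n (fun x => x ^ s * y x) (Ioc 0 1) x| ≤ C * x ^ (s - n) := by
  induction n generalizing s y with
  | zero =>
    obtain ⟨C, hC⟩ := isCompact_Icc.exists_bound_of_continuousOn h.continuousOn
    refine ⟨C, fun x hx => ?_⟩
    rw [iteratedDerivWithin_zero, abs_mul, abs_of_nonneg (rpow_nonneg hx.1.le s), Nat.cast_zero,
      sub_zero, mul_comm]
    exact mul_le_mul_of_nonneg_right (hC x (Ioc_subset_Icc_self hx)) (rpow_nonneg hx.1.le s)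
  | succ n ih =>
    obtain ⟨z, hz, hn⟩ := id h
    obtain ⟨C, hC⟩ := ih ((h.of_succ.smul s).add hn) (s - 1)
    refine ⟨C, fun x hx => ?_⟩
    rw [iteratedDerivWithin_succ',
    iteratedDerivWithin_congr (hz.derivWithin_rpow_mul s) hx,
      Nat.cast_succ, add_comm (n : ℝ), ← sub_sub]
    exact hC x hx

end EulerContDiff

theorem iteratedDerivWithin_Icc_eq_Ioc {a b : ℝ} (i : ℕ) (hx : x ∈ Ioc a b) :
    iteratedDerivWithin i y (Icc a b) x = iteratedDerivWithin i y (Ioc a b) x := by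
  have : Icc a b =ᶠ[𝓝 x] Ioc a b := by
    filter_upwards [Ioi_mem_nhds hx.1] with t ht
    exact propext ⟨fun h => ⟨ht, h.2⟩, fun h => ⟨h.1.le, h.2⟩⟩
  rw [iteratedDerivWithin, iteratedDerivWithin, iteratedFDerivWithin_congr_set this]

theorem continuousOn_Icc_of_tendsto_nhdsGT {a b : ℝ} (hcont : ContinuousOn y (Ioc a b))
    (hlim : Tendsto y (𝓝[>] a) (𝓝 (y a))) : ContinuousOn y (Icc a b) := by
  intro x hx
  rcases hx.1.eq_or_lt with rfl | hax
  · rw [← continuousWithinAt_sdiff_self, Icc_sdiff_left]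
    exact hlim.mono_left (nhdsWithin_mono _ Ioc_subset_Ioi_self)
  · refine (hcont x ⟨hax, hx.2⟩).mono_of_mem_nhdsWithin ?_
    filter_upwards [self_mem_nhdsWithin, mem_nhdsWithin_of_mem_nhds (Ioi_mem_nhds hax)]
      with t ht hat
    exact ⟨hat, ht.2⟩

theorem hasDerivAt_pow_mul_iteratedDerivWithin {n i : ℕ} (hy : ContDiffOn ℝ n y (Ioc 0 1))
    (hi : i < n) (hx : x ∈ Ioo (0 : ℝ) 1) :
    HasDerivAt (fun t => t ^ i * iteratedDerivWithin i y (Ioc 0 1) t)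
      ((i * (x ^ i * iteratedDerivWithin i y (Ioc 0 1) x) +
        x ^ (i + 1) * iteratedDerivWithin (i + 1) y (Ioc 0 1) x) / x) x := by
  have nhds : Ioc (0 : ℝ) 1 ∈ 𝓝 x := Ioc_mem_nhds hx.1 hx.2
  have deriv := ((hy.differentiableOn_iteratedDerivWithin (m := i) (by exact_mod_cast hi)
    (uniqueDiffOn_Ioc 0 1)) x (mem_of_mem_nhds nhds)).hasDerivWithinAt.hasDerivAt nhds
  rw [← iteratedDerivWithin_succ] at deriv
  refine ((hasDerivAt_pow i x).mul deriv).congr_deriv ?_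
  have hx0 : x ≠ 0 := hx.1.ne'
  cases i with
  | zero => simp [hx0]
  | succ i =>
    rw [Nat.add_sub_cancel]
    field_simp
    ring

theorem eulerContDiff_of_tendsto {n : ℕ} (hy : ContinuousOn y (Icc 0 1))
    (hyn : ContDiffOn ℝ n y (Ioc 0 1))
    (hlim : ∀ i, 1 ≤ i → i ≤ n →
      Tendsto (fun x => x ^ i * iteratedDerivWithin i y (Ioc 0 1) x) (𝓝[>] 0) (𝓝 0)) :
    EulerContDiff n y := by
  set d : ℕ → ℝ → ℝ := fun i x => x ^ i * iteratedDerivWithin i y (Ioc 0 1) x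
  have d_zero : d 0 = y := by
    ext x
    simp [d]
  have cont : ∀ i ≤ n, ContinuousOn (d i) (Icc 0 1) := fun i hi => by
    rcases i.eq_zero_or_pos with rfl | hi0
    · rwa [d_zero]
    refine continuousOn_Icc_of_tendsto_nhdsGT ?_ ?_
    · exact (continuousOn_pow i).mul
        (hyn.continuousOn_iteratedDerivWithin (by exact_mod_cast hi) (uniqueDiffOn_Ioc 0 1))
    · simpa [d, hi0.ne'] using hlim i hi0 hi
  suffices ∀ m i, i + m ≤ n → EulerContDiff m (d i) from d_zero ▸ this n 0 (zero_add n).le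
  intro m
  induction m with
  | zero => exact fun i hi => cont i hi
  | succ m ih =>
    intro i hi
    refine ⟨(i : ℝ) • d i + d (i + 1), ⟨cont i (by lia), ?_, fun x hx => ?_⟩,
      ((ih i (by lia)).smul _).add (ih (i + 1) (by lia))⟩
    · exact ((cont i (by lia)).const_smul _).add (cont (i + 1) (by lia))
    · exact hasDerivAt_pow_mul_iteratedDerivWithin hyn (by lia) hx

end EulerDerivative

theorem CqNu.eulerContDiff {q : ℕ} {ν : ℝ} {y : ℝ → ℝ} (h : CqNu q ν y) (hν : ν < 1) :
    EulerContDiff q y := by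
  obtain ⟨hy, hyq, C, hC⟩ := h
  refine eulerContDiff_of_tendsto hy hyq fun i hi hiq => ?_
  have hi0 : (0 : ℝ) < i := by exact_mod_cast hi
  have mul_le : ∀ B : ℝ → ℝ, (∀ x ∈ Ioc (0 : ℝ) 1, |iteratedDerivWithin i y (Icc 0 1) x| ≤ B x) →
      Tendsto (fun x => B x * x ^ (i : ℝ)) (𝓝[>] 0) (𝓝 0) →
      Tendsto (fun x => x ^ i * iteratedDerivWithin i y (Ioc 0 1) x) (𝓝[>] 0) (𝓝 0) := by
    intro B hB hlim
    refine squeeze_zero_norm' ?_ hlim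
    filter_upwards [Ioc_mem_nhdsGT (zero_lt_one' ℝ)] with x hx
    rw [norm_mul, norm_pow, norm_of_nonneg hx.1.le, mul_comm, rpow_natCast, norm_eq_abs,
      ← iteratedDerivWithin_Icc_eq_Ioc i hx]
    exact mul_le_mul_of_nonneg_right (hB x hx) (pow_nonneg hx.1.le i)
  have rpow_lim : ∀ {r : ℝ}, 0 < r → Tendsto (fun x : ℝ => x ^ r) (𝓝[>] 0) (𝓝 0) := fun hr =>
    tendsto_nhdsWithin_of_tendsto_nhds (by
      simpa [zero_rpow hr.ne'] using (continuous_rpow_const hr.le).tendsto 0)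
  rcases lt_trichotomy (i : ℝ) (1 - ν) with hlt | heq | hgt
  · refine mul_le (fun _ => C) (fun x hx => (hC i hi hiq x hx).1 hlt) ?_
    simpa using (rpow_lim hi0).const_mul C
  · refine mul_le _ (fun x hx => (hC i hi hiq x hx).2.1 heq) ?_
    have log_lim := (tendsto_log_mul_rpow_nhdsGT_zero hi0).norm
    rw [norm_zero] at log_lim
    have sum_lim := ((rpow_lim hi0).add log_lim).const_mul C
    rw [add_zero, mul_zero] at sum_lim
    refine sum_lim.congr' ?_
    filter_upwards [self_mem_nhdsWithin] with x hx
    rw [norm_mul, norm_of_nonneg (rpow_nonneg (le_of_lt hx) _), norm_eq_abs]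
    ring
  · refine mul_le _ (fun x hx => (hC i hi hiq x hx).2.2 hgt) ?_
    have lim := (rpow_lim (sub_pos.2 hν)).const_mul C
    rw [mul_zero] at lim
    refine lim.congr' ?_
    filter_upwards [self_mem_nhdsWithin] with x hx
    rw [mul_assoc, ← rpow_add hx, sub_add_cancel]

section Bielecki

/-- A Volterra-type operator on continuous functions on the unit interval: it is additive and its
operator norm for the Bielecki weight `exp (-L * t)` tends to `0` as `L → ∞`. Hence `1 - Φ` is
invertible. -/
structure BieleckiSmall (Φ : (ℝ → ℝ) → ℝ → ℝ) : Prop where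
  continuousOn : ∀ {h}, ContinuousOn h (Icc 0 1) → ContinuousOn (Φ h) (Icc 0 1)
  map_sub : ∀ {h₁ h₂}, ContinuousOn h₁ (Icc 0 1) → ContinuousOn h₂ (Icc 0 1) →
    EqOn (Φ (h₁ - h₂)) (Φ h₁ - Φ h₂) (Icc 0 1)
  eventually_abs_le : ∀ ε > 0, ∀ᶠ L in atTop, ∀ h, ContinuousOn h (Icc 0 1) → ∀ A : ℝ,
    (∀ t ∈ Icc (0 : ℝ) 1, |h t| ≤ A * exp (L * t)) →
      ∀ x ∈ Icc (0 : ℝ) 1, |Φ h x| ≤ ε * A * exp (L * x)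

theorem bieleckiSmall_fracIntegral {p : ℝ} (hp : 0 < p) : BieleckiSmall (fracIntegral p) where
  continuousOn := continuousOn_fracIntegral hp
  map_sub h₁ h₂ _ := fracIntegral_sub hp h₁ h₂
  eventually_abs_le ε hε := by
    filter_upwards [(tendsto_rpow_neg_atTop hp).eventually_le_const hε, eventually_gt_atTop 0]
      with L hLε hL h _ A hA x hx
    have hA0 : 0 ≤ A := by simpa using (abs_nonneg _).trans (hA 0 (left_mem_Icc.2 zero_le_one))
    refine (abs_fracIntegral_le_of_abs_le_exp hp hL hx.1
      fun t ht => hA t ⟨ht.1, ht.2.trans hx.2⟩).trans ?_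
    gcongr

namespace BieleckiSmall

variable {Φ Ψ : (ℝ → ℝ) → ℝ → ℝ} {b F w : ℝ → ℝ}

protected theorem map_add (hΦ : BieleckiSmall Φ) {h₁ h₂ : ℝ → ℝ} (hh₁ : ContinuousOn h₁ (Icc 0 1))
    (hh₂ : ContinuousOn h₂ (Icc 0 1)) : EqOn (Φ (h₁ + h₂)) (Φ h₁ + Φ h₂) (Icc 0 1) := fun x hx => by
  have := hΦ.map_sub (hh₁.add hh₂) hh₂ hx
  rw [add_sub_cancel_right, Pi.sub_apply, eq_sub_iff_add_eq] at this
  exact this.symm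

protected theorem congr (hΦ : BieleckiSmall Φ) {h₁ h₂ : ℝ → ℝ} (hh₁ : ContinuousOn h₁ (Icc 0 1))
    (hh₂ : ContinuousOn h₂ (Icc 0 1)) (heq : EqOn h₁ h₂ (Icc 0 1)) :
    EqOn (Φ h₁) (Φ h₂) (Icc 0 1) := fun x hx => by
  obtain ⟨L, hL⟩ := (hΦ.eventually_abs_le 1 one_pos).exists
  have abs_le : |Φ (h₁ - h₂) x| ≤ 0 := by
    simpa using hL _ (hh₁.sub hh₂) 0 (fun t ht => by simp [heq ht]) x hx
  rw [hΦ.map_sub hh₁ hh₂ hx, abs_nonpos_iff, Pi.sub_apply] at abs_le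
  exact sub_eq_zero.1 abs_le

protected theorem add (hΦ : BieleckiSmall Φ) (hΨ : BieleckiSmall Ψ) :
    BieleckiSmall fun h => Φ h + Ψ h where
  continuousOn h := (hΦ.continuousOn h).add (hΨ.continuousOn h)
  map_sub h₁ h₂ x hx := by
    simp only [Pi.add_apply, Pi.sub_apply, hΦ.map_sub h₁ h₂ hx, hΨ.map_sub h₁ h₂ hx]
    ring
  eventually_abs_le ε hε := by
    filter_upwards [hΦ.eventually_abs_le (ε / 2) (by positivity),
      hΨ.eventually_abs_le (ε / 2) (by positivity)] with L hLΦ hLΨ h hh A hA x hx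
    calc |Φ h x + Ψ h x| ≤ |Φ h x| + |Ψ h x| := abs_add_le _ _
      _ ≤ ε / 2 * A * exp (L * x) + ε / 2 * A * exp (L * x) :=
          add_le_add (hLΦ h hh A hA x hx) (hLΨ h hh A hA x hx)
      _ = ε * A * exp (L * x) := by ring

protected theorem sub (hΦ : BieleckiSmall Φ) (hΨ : BieleckiSmall Ψ) :
    BieleckiSmall fun h => Φ h - Ψ h where
  continuousOn h := (hΦ.continuousOn h).sub (hΨ.continuousOn h)
  map_sub h₁ h₂ x hx := by
    simp only [Pi.sub_apply, hΦ.map_sub h₁ h₂ hx, hΨ.map_sub h₁ h₂ hx]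
    ring
  eventually_abs_le ε hε := by
    filter_upwards [hΦ.eventually_abs_le (ε / 2) (by positivity),
      hΨ.eventually_abs_le (ε / 2) (by positivity)] with L hLΦ hLΨ h hh A hA x hx
    calc |Φ h x - Ψ h x| ≤ |Φ h x| + |Ψ h x| := abs_sub _ _
      _ ≤ ε / 2 * A * exp (L * x) + ε / 2 * A * exp (L * x) :=
          add_le_add (hLΦ h hh A hA x hx) (hLΨ h hh A hA x hx)
      _ = ε * A * exp (L * x) := by ring

protected theorem comp (hΦ : BieleckiSmall Φ) (hΨ : BieleckiSmall Ψ) :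
    BieleckiSmall fun h => Φ (Ψ h) where
  continuousOn h := hΦ.continuousOn (hΨ.continuousOn h)
  map_sub h₁ h₂ x hx := by
    rw [hΦ.congr (hΨ.continuousOn (h₁.sub h₂)) ((hΨ.continuousOn h₁).sub (hΨ.continuousOn h₂))
      (hΨ.map_sub h₁ h₂) hx]
    exact hΦ.map_sub (hΨ.continuousOn h₁) (hΨ.continuousOn h₂) hx
  eventually_abs_le ε hε := by
    filter_upwards [hΦ.eventually_abs_le ε hε, hΨ.eventually_abs_le 1 one_pos]
      with L hLΦ hLΨ h hh A hA
    exact hLΦ _ (hΨ.continuousOn hh) A (by simpa using hLΨ h hh A hA)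

theorem comp_mul (hΦ : BieleckiSmall Φ) (hb : ContinuousOn b (Icc 0 1)) :
    BieleckiSmall fun h => Φ (b * h) where
  continuousOn h := hΦ.continuousOn (hb.mul h)
  map_sub h₁ h₂ := by
    rw [mul_sub]
    exact hΦ.map_sub (hb.mul h₁) (hb.mul h₂)
  eventually_abs_le ε hε := by
    obtain ⟨M, hM⟩ := isCompact_Icc.exists_bound_of_continuousOn hb
    have hM0 : 0 ≤ M := (norm_nonneg _).trans (hM 0 (left_mem_Icc.2 zero_le_one))
    filter_upwards [hΦ.eventually_abs_le (ε / (M + 1)) (by positivity)] with L hL h hh A hA x hx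
    have mul_le : ∀ t ∈ Icc (0 : ℝ) 1, |(b * h) t| ≤ (M + 1) * A * exp (L * t) := fun t ht => by
      rw [Pi.mul_apply, abs_mul, mul_assoc]
      exact mul_le_mul ((hM t ht).trans (by linarith)) (hA t ht) (abs_nonneg _) (by positivity)
    refine (hL _ (hb.mul hh) _ mul_le x hx).trans_eq ?_
    field_simp

protected theorem erdelyiKober_one (hΦ : BieleckiSmall Φ) :
    BieleckiSmall fun h => erdelyiKober 1 (Φ h) where
  continuousOn h := continuousOn_erdelyiKober one_pos (hΦ.continuousOn h)
  map_sub h₁ h₂ x hx := by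
    rw [erdelyiKober_congr (hΦ.map_sub h₁ h₂) hx]
    exact erdelyiKober_sub one_pos (hΦ.continuousOn h₁) (hΦ.continuousOn h₂) hx
  eventually_abs_le ε hε := by
    filter_upwards [hΦ.eventually_abs_le ε hε, eventually_ge_atTop 0] with L hL hL0 h hh A hA x hx
    have hA0 : 0 ≤ A := by simpa using (abs_nonneg _).trans (hA 0 (left_mem_Icc.2 zero_le_one))
    refine abs_erdelyiKober_one_le hx.1 fun t ht => ?_
    refine (hL h hh A hA t ⟨ht.1, ht.2.trans hx.2⟩).trans ?_
    gcongr
    exact ht.2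

theorem eqOn_zero (hΦ : BieleckiSmall Φ) (hw : ContinuousOn w (Icc 0 1))
    (heq : EqOn w (Φ w) (Icc 0 1)) : EqOn w 0 (Icc 0 1) := by
  obtain ⟨L, hL⟩ := (hΦ.eventually_abs_le (1 / 2) (by norm_num)).exists
  have cont : ContinuousOn (fun x => |w x| / exp (L * x)) (Icc 0 1) := by fun_prop (disch := simp)
  obtain ⟨x₀, hx₀, hmax⟩ := isCompact_Icc.exists_isMaxOn (nonempty_Icc.2 zero_le_one) cont
  set A := |w x₀| / exp (L * x₀)
  have le_A : ∀ t ∈ Icc (0 : ℝ) 1, |w t| ≤ A * exp (L * t) := fun t ht =>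
    (div_le_iff₀ (exp_pos _)).1 (hmax ht)
  have half : A ≤ 1 / 2 * A := by
    have := hL w hw A le_A x₀ hx₀
    rwa [← heq hx₀, ← div_le_iff₀ (exp_pos _)] at this
  intro x hx
  refine abs_nonpos_iff.1 ((le_A x hx).trans ?_)
  exact mul_nonpos_of_nonpos_of_nonneg (by linarith) (exp_pos _).le

theorem exists_eq_add (hΦ : BieleckiSmall Φ) (hF : ContinuousOn F (Icc 0 1)) :
    ∃ w, Continuous w ∧ EqOn w (F + Φ w) (Icc 0 1) := by
  obtain ⟨L, hL⟩ := (hΦ.eventually_abs_le (1 / 2) (by norm_num)).exists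
  let ext (ω : C(Icc (0 : ℝ) 1, ℝ)) (t : ℝ) : ℝ := exp (L * t) * IccExtend zero_le_one ω t
  have cont_ext : ∀ ω, Continuous (ext ω) := fun ω => by
    have : Continuous (IccExtend (zero_le_one (α := ℝ)) ω) := ω.continuous.Icc_extend'
    fun_prop
  have ext_apply : ∀ ω (x : Icc (0 : ℝ) 1), ext ω x = exp (L * x) * ω x := fun ω x => by
    simp only [ext, IccExtend_val]
  have cont_step : ∀ ω, Continuous fun x : Icc (0 : ℝ) 1 => (F + Φ (ext ω)) x / exp (L * x) :=
    fun ω => (hF.add (hΦ.continuousOn (cont_ext ω).continuousOn)).domRestrict.div (by fun_prop)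
      fun _ => (exp_pos _).ne'
  let step (ω : C(Icc (0 : ℝ) 1, ℝ)) : C(Icc (0 : ℝ) 1, ℝ) := ⟨_, cont_step ω⟩
  have contracting : ContractingWith (1 / 2) step := by
    refine ⟨NNReal.half_lt_self one_ne_zero, LipschitzWith.of_dist_le_mul fun ω ω' => ?_⟩
    refine (ContinuousMap.dist_le (by positivity)).2 fun x => ?_
    have ext_le : ∀ t ∈ Icc (0 : ℝ) 1, |(ext ω - ext ω') t| ≤ dist ω ω' * exp (L * t) :=
        fun t ht => by
      rw [Pi.sub_apply, ext_apply ω ⟨t, ht⟩, ext_apply ω' ⟨t, ht⟩, ← mul_sub, abs_mul, abs_exp,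
        mul_comm]
      gcongr
      exact ContinuousMap.dist_apply_le_dist (f := ω) (g := ω') ⟨t, ht⟩
    have sub_le := hL _ ((cont_ext ω).sub (cont_ext ω')).continuousOn _ ext_le x x.2
    rw [hΦ.map_sub (cont_ext ω).continuousOn (cont_ext ω').continuousOn x.2,
      ← div_le_iff₀ (exp_pos _)] at sub_le
    have dist_eq : dist (step ω x) (step ω' x) = |(Φ (ext ω) - Φ (ext ω')) x| / exp (L * x) := by
      rw [dist_eq, ← abs_exp (L * x), ← abs_div]
      simp only [step, ContinuousMap.coe_mk, Pi.add_apply, Pi.sub_apply]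
      ring_nf
    rw [dist_eq]
    exact_mod_cast sub_le
  refine ⟨ext (contracting.fixedPoint step), cont_ext _, fun x hx => ?_⟩
  have fixed := DFunLike.congr_fun contracting.fixedPoint_isFixedPt ⟨x, hx⟩
  rw [ext_apply _ ⟨x, hx⟩, ← fixed]
  exact mul_div_cancel₀ _ (exp_pos _).ne'

section EulerDerivative

variable {F' G H : ℝ → ℝ}

theorem eqOn_add_erdelyiKober_one (hΦ : BieleckiSmall Φ) (hΨ : BieleckiSmall Ψ)
    (hcomm : ∀ {h h'}, HasEulerDeriv h h' → HasEulerDeriv (Φ h) (Φ h' + Ψ h))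
    (hF : HasEulerDeriv F F') (hw : ContinuousOn w (Icc 0 1)) (hG : ContinuousOn G (Icc 0 1))
    (hwF : EqOn w (F + Φ w) (Icc 0 1)) (hGF : EqOn G (F' + Ψ w + Φ G) (Icc 0 1))
    (hH : HasEulerDeriv H (w + G - H)) :
    EqOn (F + Φ H) (erdelyiKober 1 (w + G) + erdelyiKober 1 (Ψ (H - w))) (Icc 0 1) := by
  have hE : HasEulerDeriv (F + Φ H) (F' + (Φ (w + G - H) + Ψ H)) := hF.add (hcomm hH)
  have cH := hH.continuousOn
  have sum_eq : EqOn (F + Φ H + (F' + (Φ (w + G - H) + Ψ H))) (w + G + Ψ (H - w)) (Icc 0 1) := by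
    intro t ht
    have w_eq := hwF ht
    have G_eq := hGF ht
    have Φ_sub := hΦ.map_sub (hw.add hG) cH ht
    have Φ_add := hΦ.map_add hw hG ht
    have Ψ_sub := hΨ.map_sub cH hw ht
    simp only [Pi.add_apply, Pi.sub_apply] at *
    linarith
  intro x hx
  rw [hE.eqOn_erdelyiKober_one hx, erdelyiKober_congr sum_eq hx,
    erdelyiKober_add one_pos (hw.add hG) (hΨ.continuousOn (cH.sub hw)) hx, Pi.add_apply]

-- `G` solves the equation that `x w'` must satisfy. The function `H` with `H + x H' = w + G` then
-- satisfies the same equation as `w` up to a term of lower order in `H - w`, hence equals `w`.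
theorem hasEulerDeriv_of_eqOn_add (hΦ : BieleckiSmall Φ) (hΨ : BieleckiSmall Ψ)
    (hcomm : ∀ {h h'}, HasEulerDeriv h h' → HasEulerDeriv (Φ h) (Φ h' + Ψ h))
    (hF : HasEulerDeriv F F') (hw : ContinuousOn w (Icc 0 1)) (hG : ContinuousOn G (Icc 0 1))
    (hwF : EqOn w (F + Φ w) (Icc 0 1)) (hGF : EqOn G (F' + Ψ w + Φ G) (Icc 0 1)) :
    HasEulerDeriv w G := by
  set H := erdelyiKober 1 (w + G) with H_def
  have hH : HasEulerDeriv H (w + G - H) := hasEulerDeriv_erdelyiKober_one (hw.add hG)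
  have cH := hH.continuousOn
  have H_sub_w : EqOn (H - w) (Φ (H - w) - erdelyiKober 1 (Ψ (H - w))) (Icc 0 1) := fun x hx => by
    have H_eq := hΦ.eqOn_add_erdelyiKober_one hΨ hcomm hF hw hG hwF hGF hH hx
    have w_eq := hwF hx
    have Φ_sub := hΦ.map_sub cH hw hx
    simp only [← H_def, Pi.add_apply, Pi.sub_apply] at *
    linarith
  have w_eq_H : EqOn w H (Icc 0 1) := fun x hx => (sub_eq_zero.1
    ((hΦ.sub hΨ.erdelyiKober_one).eqOn_zero (cH.sub hw) H_sub_w hx)).symm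
  refine hH.congr w_eq_H fun x hx => ?_
  simp only [Pi.add_apply, Pi.sub_apply, w_eq_H hx, add_sub_cancel_left]

end EulerDerivative

end BieleckiSmall

end Bielecki

section Volterra

/-- The Volterra operator of the integral equation equivalent to the fractional differential
equation: it integrates `b * h + c * ∫₀ˣ h` to fractional order `p`. -/
noncomputable def volterraOp (p : ℝ) (b c h : ℝ → ℝ) : ℝ → ℝ :=
  fracIntegral p (b * h) + fracIntegral p (c * fracIntegral 1 h)

variable {p : ℝ} {b b' c c' h h' F F' G w : ℝ → ℝ} {n : ℕ}

theorem bieleckiSmall_volterraOp (hp : 0 < p) (hb : ContinuousOn b (Icc 0 1))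
    (hc : ContinuousOn c (Icc 0 1)) : BieleckiSmall (volterraOp p b c) :=
  ((bieleckiSmall_fracIntegral hp).comp_mul hb).add
    (((bieleckiSmall_fracIntegral hp).comp_mul hc).comp (bieleckiSmall_fracIntegral one_pos))

protected theorem EulerContDiff.volterraOp (hb : EulerContDiff n b) (hc : EulerContDiff n c)
    (hh : EulerContDiff n h) (hp : 0 < p) : EulerContDiff n (volterraOp p b c h) :=
  ((hb.mul hh).fracIntegral hp).add ((hc.mul (hh.fracIntegral one_pos)).fracIntegral hp)

protected theorem HasEulerDeriv.volterraOp (hb : HasEulerDeriv b b') (hc : HasEulerDeriv c c')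
    (hh : HasEulerDeriv h h') (hp : 0 < p) :
    HasEulerDeriv (volterraOp p b c h)
      (volterraOp p b c h' + volterraOp p (p • b + b') ((p + 1) • c + c') h) := by
  have hJh := hh.fracIntegral one_pos
  refine (((hb.mul hh).fracIntegral hp).add ((hc.mul hJh).fracIntegral hp)).congr
    (eqOn_refl _ _) fun x hx => ?_
  have cb := hb.continuousOn
  have cb' := hb.continuousOn_deriv
  have cc := hc.continuousOn
  have cc' := hc.continuousOn_deriv
  have ch := hh.continuousOn
  have ch' := hh.continuousOn_deriv
  have cJh := continuousOn_fracIntegral one_pos ch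
  have cJh' := continuousOn_fracIntegral one_pos ch'
  have first : fracIntegral p (p • (b * h) + (b' * h + b * h')) x =
      fracIntegral p (b * h') x + fracIntegral p ((p • b + b') * h) x := by
    rw [← fracIntegral_add hp (by fun_prop) (by fun_prop) hx]
    congr 1
    rw [add_mul, smul_mul_assoc]
    abel
  have second : fracIntegral p
      (p • (c * fracIntegral 1 h) +
        (c' * fracIntegral 1 h + c * fracIntegral 1 ((1 : ℝ) • h + h'))) x =
      fracIntegral p (c * fracIntegral 1 h') x +
        fracIntegral p (((p + 1) • c + c') * fracIntegral 1 h) x := by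
    rw [← fracIntegral_add hp (by fun_prop) (by fun_prop) hx]
    refine fracIntegral_congr (fun t ht => ?_) hx
    simp only [Pi.add_apply, Pi.mul_apply, Pi.smul_apply, smul_eq_mul, one_smul,
      fracIntegral_add one_pos ch ch' ht]
    ring
  simp only [Pi.add_apply, volterraOp, first, second]
  ring

theorem hasEulerDeriv_of_eqOn_volterraOp (hp : 0 < p) (hb : HasEulerDeriv b b')
    (hc : HasEulerDeriv c c') (hF : HasEulerDeriv F F') (hw : ContinuousOn w (Icc 0 1))
    (hG : ContinuousOn G (Icc 0 1)) (hwF : EqOn w (F + volterraOp p b c w) (Icc 0 1))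
    (hGF : EqOn G (F' + volterraOp p (p • b + b') ((p + 1) • c + c') w + volterraOp p b c G)
      (Icc 0 1)) :
    HasEulerDeriv w G :=
  (bieleckiSmall_volterraOp hp hb.continuousOn hc.continuousOn).hasEulerDeriv_of_eqOn_add
    (bieleckiSmall_volterraOp hp ((hb.continuousOn.const_smul _).add hb.continuousOn_deriv)
      ((hc.continuousOn.const_smul _).add hc.continuousOn_deriv))
    (fun hh => hb.volterraOp hc hh hp) hF hw hG hwF hGF

theorem eulerContDiff_of_eqOn_volterraOp (hp : 0 < p) (hb : EulerContDiff n b)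
    (hc : EulerContDiff n c) (hF : EulerContDiff n F) (hw : ContinuousOn w (Icc 0 1))
    (hwF : EqOn w (F + volterraOp p b c w) (Icc 0 1)) : EulerContDiff n w := by
  induction n generalizing F w with
  | zero => exact hw
  | succ n ih =>
    obtain ⟨b', hb', hbn⟩ := id hb
    obtain ⟨c', hc', hcn⟩ := id hc
    obtain ⟨F', hF', hFn⟩ := id hF
    have hwn : EulerContDiff n w := ih hb.of_succ hc.of_succ hF.of_succ hw hwF
    have hF₁ : EulerContDiff n (F' + volterraOp p (p • b + b') ((p + 1) • c + c') w) :=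
      hFn.add (((hb.of_succ.smul p).add hbn).volterraOp ((hc.of_succ.smul (p + 1)).add hcn) hwn hp)
    obtain ⟨G, hG, hGF⟩ :=
      (bieleckiSmall_volterraOp hp hb.continuousOn hc.continuousOn).exists_eq_add hF₁.continuousOn
    exact ⟨G, hasEulerDeriv_of_eqOn_volterraOp hp hb' hc' hF' hw hG.continuousOn hwF hGF,
      ih hb.of_succ hc.of_succ hF₁ hG.continuousOn hGF⟩

end Volterra

section CaputoEquation

variable {p t x : ℝ} {v w z : ℝ → ℝ}

theorem intervalIntegrable_sub_rpow_mul_of_nonneg (hp : 0 ≤ p)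
    (hv : IntervalIntegrable v volume 0 1) (hx : x ∈ Ioc (0 : ℝ) 1) :
    IntervalIntegrable (fun t => (x - t) ^ p * v t) volume 0 x :=
  (hv.mono_set (by simpa [uIcc_of_le hx.1.le] using Icc_subset_Icc_right hx.2)).continuousOn_mul
    ((continuous_rpow_const hp).comp (continuous_const.sub continuous_id)).continuousOn

namespace HasEulerDeriv

theorem derivWithin_eq_div (h : HasEulerDeriv w z) (hx : x ∈ Ioc (0 : ℝ) 1) :
    derivWithin w (Icc 0 1) x = z x / x :=
  (h.hasDerivWithinAt hx).derivWithin (uniqueDiffOn_Icc zero_lt_one x (Ioc_subset_Icc_self hx))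

theorem mul_sub_rpow_mul_derivWithin (h : HasEulerDeriv w z) (ht : t ∈ Ioo 0 x) (hx : x ≤ 1) :
    x * ((x - t) ^ (p - 1) * derivWithin w (Icc 0 1) t) =
      (x - t) ^ (p - 1) * z t + (x - t) ^ p * derivWithin w (Icc 0 1) t := by
  have ht0 : t ≠ 0 := ht.1.ne'
  have hxt : x - t ≠ 0 := (sub_pos.2 ht.2).ne'
  rw [h.derivWithin_eq_div ⟨ht.1, ht.2.le.trans hx⟩, rpow_sub_one hxt]
  field_simp
  ring

theorem intervalIntegrable_sub_rpow_mul_derivWithin (h : HasEulerDeriv w z) (hp : 0 < p)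
    (hint : IntervalIntegrable (derivWithin w (Icc 0 1)) volume 0 1) (hx : x ∈ Ioc (0 : ℝ) 1) :
    IntervalIntegrable (fun t => (x - t) ^ (p - 1) * derivWithin w (Icc 0 1) t) volume 0 x := by
  refine (((intervalIntegrable_sub_rpow_mul hp h.continuousOn_deriv (Ioc_subset_Icc_self hx)).add
    (intervalIntegrable_sub_rpow_mul_of_nonneg hp.le hint hx)).const_mul x⁻¹).congr_uIoo
      fun t ht => ?_
  rw [uIoo_of_le hx.1.le] at ht
  beta_reduce
  rw [← h.mul_sub_rpow_mul_derivWithin ht hx.2, inv_mul_cancel_left₀ hx.1.ne']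

theorem mul_fracIntegral_derivWithin (h : HasEulerDeriv w z) (hp : 0 < p)
    (hint : IntervalIntegrable (derivWithin w (Icc 0 1)) volume 0 1) (hx : x ∈ Ioc (0 : ℝ) 1) :
    x * fracIntegral p (derivWithin w (Icc 0 1)) x =
      fracIntegral p z x + p * fracIntegral (p + 1) (derivWithin w (Icc 0 1)) x := by
  have hΓ : Gamma p ≠ 0 := (Gamma_pos_of_pos hp).ne'
  have split : x * ∫ t in (0 : ℝ)..x, (x - t) ^ (p - 1) * derivWithin w (Icc 0 1) t =
      (∫ t in (0 : ℝ)..x, (x - t) ^ (p - 1) * z t) +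
        ∫ t in (0 : ℝ)..x, (x - t) ^ p * derivWithin w (Icc 0 1) t := by
    rw [← intervalIntegral.integral_const_mul, ← intervalIntegral.integral_add
      (intervalIntegrable_sub_rpow_mul hp h.continuousOn_deriv (Ioc_subset_Icc_self hx))
      (intervalIntegrable_sub_rpow_mul_of_nonneg hp.le hint hx)]
    exact intervalIntegral.integral_congr_Ioo_of_le hx.1.le fun t ht =>
      h.mul_sub_rpow_mul_derivWithin ht hx.2
  simp only [fracIntegral, Gamma_add_one hp.ne', add_sub_cancel_right]
  field_simp
  rw [split]

theorem fracIntegral_add_one_derivWithin (h : HasEulerDeriv w z) (hp : 0 < p)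
    (hint : IntervalIntegrable (derivWithin w (Icc 0 1)) volume 0 1) (hx : x ∈ Ioc (0 : ℝ) 1) :
    fracIntegral (p + 1) (derivWithin w (Icc 0 1)) x = fracIntegral p (w - fun _ => w 0) x := by
  have hΓ : Gamma p ≠ 0 := (Gamma_pos_of_pos hp).ne'
  have sub : Icc 0 x ⊆ Icc 0 1 := Icc_subset_Icc_right hx.2
  have parts := intervalIntegral.integral_mul_deriv_eq_deriv_mul_of_hasDerivAt (a := 0) (b := x)
    (u := fun t => (x - t) ^ p) (u' := fun t => -p * (x - t) ^ (p - 1))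
    (v := w - fun _ => w 0) (v' := derivWithin w (Icc 0 1))
    ((continuous_rpow_const hp.le).comp (continuous_const.sub continuous_id)).continuousOn
    (by
      rw [uIcc_of_le hx.1.le]
      exact (h.continuousOn.sub continuousOn_const).mono sub)
    (fun t ht => by
      rw [min_eq_left hx.1.le, max_eq_right hx.1.le] at ht
      refine (((hasDerivAt_id t).const_sub x).rpow_const
        (Or.inl (sub_pos.2 ht.2).ne')).congr_deriv ?_
      simp only [id_eq]
      ring)
    (fun t ht => by
      rw [min_eq_left hx.1.le, max_eq_right hx.1.le] at ht
      have ht1 : t < 1 := ht.2.trans_le hx.2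
      rw [h.derivWithin_eq_div ⟨ht.1, ht1.le⟩]
      exact (h.hasDerivAt t ⟨ht.1, ht1⟩).sub_const _)
    ((intervalIntegrable_sub_rpow hp x).const_mul _)
    (hint.mono_set (by simpa [uIcc_of_le hx.1.le] using sub))
  simp only [Pi.sub_apply, sub_self, zero_rpow hp.ne', zero_mul, mul_zero, neg_mul, mul_assoc,
    intervalIntegral.integral_neg, intervalIntegral.integral_const_mul, zero_sub, neg_neg] at parts
  simp only [fracIntegral, Gamma_add_one hp.ne', add_sub_cancel_right, parts, Pi.sub_apply]
  field_simp

theorem hasDerivAt_fracIntegral_sub_initial (h : HasEulerDeriv w z) (hp : 0 < p)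
    (hint : IntervalIntegrable (derivWithin w (Icc 0 1)) volume 0 1) (hx : x ∈ Ioo (0 : ℝ) 1) :
    HasDerivAt (fracIntegral p (w - fun _ => w 0))
      (fracIntegral p (derivWithin w (Icc 0 1)) x) x := by
  have hx' : x ∈ Ioc (0 : ℝ) 1 := Ioo_subset_Ioc_self hx
  have hI : x ∈ Icc (0 : ℝ) 1 := Ioo_subset_Icc_self hx
  have hsub : HasEulerDeriv (w - fun _ => w 0) z := by
    simpa [sub_eq_add_neg, Pi.neg_def] using h.add (HasEulerDeriv.const (-w 0))
  refine ((hsub.fracIntegral hp).hasDerivAt x hx).congr_deriv ?_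
  rw [div_eq_iff hx.1.ne', mul_comm, h.mul_fracIntegral_derivWithin hp hint hx',
    h.fracIntegral_add_one_derivWithin hp hint hx', fracIntegral_add hp
      (hsub.continuousOn.const_smul p) h.continuousOn_deriv hI, fracIntegral_smul, add_comm]

-- Both sides say that `fracIntegral p (w - w 0) = fracIntegral 1 v`: differentiate, respectively
-- apply `fracIntegral (1 - p)`.
theorem fracIntegral_derivWithin_eq_iff (h : HasEulerDeriv w z) (hp : 0 < p) (hp1 : p < 1)
    (hint : IntervalIntegrable (derivWithin w (Icc 0 1)) volume 0 1)
    (hv : ContinuousOn v (Icc 0 1)) :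
    (∀ x ∈ Ioo (0 : ℝ) 1, fracIntegral p (derivWithin w (Icc 0 1)) x = v x) ↔
      ∀ x ∈ Icc (0 : ℝ) 1, w x = w 0 + fracIntegral (1 - p) v x := by
  have hq : 0 < 1 - p := sub_pos.2 hp1
  have cont : ContinuousOn (w - fun _ => w 0) (Icc 0 1) := h.continuousOn.sub continuousOn_const
  constructor <;> intro heq
  · have integrated : EqOn (fracIntegral p (w - fun _ => w 0)) (fracIntegral 1 v) (Icc 0 1) :=
      fun x hx => by
        have sub : Icc 0 x ⊆ Icc 0 1 := Icc_subset_Icc_right hx.2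
        rw [fracIntegral_one, intervalIntegral.integral_eq_sub_of_hasDerivAt_of_le hx.1
          ((continuousOn_fracIntegral hp cont).mono sub), fracIntegral_apply_zero, sub_zero]
        · intro t ht
          have ht1 : t ∈ Ioo (0 : ℝ) 1 := ⟨ht.1, ht.2.trans_le hx.2⟩
          exact heq t ht1 ▸ h.hasDerivAt_fracIntegral_sub_initial hp hint ht1
        · exact (hv.mono (uIcc_of_le hx.1 ▸ sub)).intervalIntegrable
    have := eqOn_of_eqOn_fracIntegral_one one_pos cont (continuousOn_fracIntegral hq hv)
      fun x hx => by
        rw [fracIntegral_fracIntegral one_pos hq hv hx, add_comm,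
          ← fracIntegral_fracIntegral hq one_pos hv hx, ← fracIntegral_congr integrated hx,
          fracIntegral_fracIntegral hq hp cont hx, sub_add_cancel]
    exact fun x hx => eq_add_of_sub_eq' (this hx)
  · have integrated : EqOn (fracIntegral p (w - fun _ => w 0)) (fracIntegral 1 v) (Icc 0 1) :=
      fun x hx => by
        have w_sub : EqOn (w - fun _ => w 0) (fracIntegral (1 - p) v) (Icc 0 1) :=
          fun t ht => sub_eq_of_eq_add' (heq t ht)
        rw [fracIntegral_congr w_sub hx, fracIntegral_fracIntegral hp hq hv hx, add_sub_cancel]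
    exact fun x hx => (h.hasDerivAt_fracIntegral_sub_initial hp hint hx).unique <|
      (hasDerivAt_fracIntegral_one hv hx).congr_of_eventuallyEq <|
        integrated.eventuallyEq_of_mem (Icc_mem_nhds hx.1 hx.2)

end HasEulerDeriv

end CaputoEquation

section Positivity

variable {p x : ℝ} {w z : ℝ → ℝ}

theorem exists_first_zero {a b : ℝ} (hab : a ≤ b) (hw : ContinuousOn w (Icc a b)) (ha : 0 < w a)
    (hb : w b ≤ 0) : ∃ x ∈ Ioc a b, w x = 0 ∧ ∀ t ∈ Ico a x, 0 < w t := by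
  have zero_before : ∀ t ∈ Icc a b, w t ≤ 0 → ∃ s ∈ Icc a t, w s = 0 := fun t ht hwt =>
    intermediate_value_Icc' ht.1 (hw.mono (Icc_subset_Icc_right ht.2)) ⟨hwt, ha.le⟩
  have compact : IsCompact (Icc a b ∩ w ⁻¹' {0}) :=
    isCompact_Icc.of_isClosed_subset
      (hw.preimage_isClosed_of_isClosed isClosed_Icc isClosed_singleton) inter_subset_left
  obtain ⟨x, ⟨hx, hwx⟩, least⟩ := compact.exists_isLeast (zero_before b (right_mem_Icc.2 hab) hb)
  have hax : a ≠ x := by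
    rintro rfl
    exact ha.ne' hwx
  refine ⟨x, ⟨hx.1.lt_of_ne hax, hx.2⟩, hwx, fun t ht => not_le.1 fun hwt => ?_⟩
  obtain ⟨s, hs, hws⟩ := zero_before t ⟨ht.1, ht.2.le.trans hx.2⟩ hwt
  have hst : s ≤ b := (hs.2.trans ht.2.le).trans hx.2
  exact (least ⟨⟨hs.1, hst⟩, hws⟩).not_gt (hs.2.trans_lt ht.2)

theorem continuousOn_sub_rpow_mul_of_eq_zero {s : Set ℝ} (hp : 0 < p) (hs : s ∈ 𝓝 x)
    (hw : ContinuousOn w s) (hd : DifferentiableAt ℝ w x) (hwx : w x = 0) :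
    ContinuousOn (fun t => (x - t) ^ (p - 1) * w t) (s ∩ Iic x) := by
  have slope_cont : ContinuousOn (fun t => -((x - t) ^ p * dslope w x t)) s :=
    (((continuous_rpow_const hp.le).comp (continuous_const.sub continuous_id)).continuousOn.mul
      ((continuousOn_dslope hs).2 ⟨hw, hd⟩)).neg
  refine (slope_cont.mono inter_subset_left).congr fun t ht => ?_
  rcases (mem_Iic.1 ht.2).eq_or_lt with rfl | htx
  · simp [hwx, zero_rpow hp.ne']
  · have hxt : x - t ≠ 0 := (sub_pos.2 htx).ne'
    have htx' : t - x ≠ 0 := (sub_neg.2 htx).ne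
    beta_reduce
    rw [dslope_of_ne w htx.ne, slope_def_field, hwx, rpow_sub_one hxt]
    field_simp
    ring

namespace HasEulerDeriv

theorem fracIntegral_derivWithin_neg (h : HasEulerDeriv w z) (hp : 0 < p) (hp1 : p < 1)
    (hint : IntervalIntegrable (derivWithin w (Icc 0 1)) volume 0 1) (hx : x ∈ Ioo (0 : ℝ) 1)
    (hpos : ∀ t ∈ Ico 0 x, 0 < w t) (hwx : w x = 0) :
    fracIntegral p (derivWithin w (Icc 0 1)) x < 0 := by
  have kernel_cont : ContinuousOn (fun t => (x - t) ^ (p - 1) * w t) (Icc 0 x) :=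
    (continuousOn_sub_rpow_mul_of_eq_zero hp (Icc_mem_nhds hx.1 hx.2) h.continuousOn
      (h.hasDerivAt x hx).differentiableAt hwx).mono fun t ht => ⟨⟨ht.1, ht.2.trans hx.2.le⟩, ht.2⟩
  have kernel_deriv : ∀ t ∈ Ioo 0 x, HasDerivAt (fun t => (x - t) ^ (p - 1) * w t)
      ((1 - p) * (x - t) ^ (p - 1 - 1) * w t +
        (x - t) ^ (p - 1) * derivWithin w (Icc 0 1) t) t := fun t ht => by
    have ht1 : t ∈ Ioo (0 : ℝ) 1 := ⟨ht.1, ht.2.trans hx.2⟩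
    rw [h.derivWithin_eq_div (Ioo_subset_Ioc_self ht1)]
    refine ((((hasDerivAt_id t).const_sub x).rpow_const
      (Or.inl (sub_pos.2 ht.2).ne')).mul (h.hasDerivAt t ht1)).congr_deriv ?_
    simp only [id_eq]
    ring
  have integral_le := intervalIntegral.integral_le_sub_of_hasDeriv_right_of_le hx.1.le kernel_cont
    (fun t ht => (kernel_deriv t ht).hasDerivWithinAt)
    ((intervalIntegrable_iff_integrableOn_Icc_of_le hx.1.le).1 <|
      h.intervalIntegrable_sub_rpow_mul_derivWithin hp hint (Ioo_subset_Ioc_self hx))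
    fun t ht => le_add_of_nonneg_left <| mul_nonneg
      (mul_nonneg (sub_nonneg.2 hp1.le) (rpow_nonneg (sub_nonneg.2 ht.2.le) _))
      (hpos t (Ioo_subset_Ico_self ht)).le
  rw [hwx, mul_zero, zero_sub, sub_zero] at integral_le
  have initial : 0 < x ^ (p - 1) * w 0 :=
    mul_pos (rpow_pos_of_pos hx.1 _) (hpos 0 (left_mem_Ico.2 hx.1))
  exact mul_neg_of_pos_of_neg (one_div_pos.2 (Gamma_pos_of_pos hp)) (by linarith)

theorem pos_of_fracIntegral_derivWithin_nonneg (h : HasEulerDeriv w z) (hp : 0 < p) (hp1 : p < 1)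
    (hint : IntervalIntegrable (derivWithin w (Icc 0 1)) volume 0 1) (h0 : 0 < w 0)
    (hnonneg : ∀ x ∈ Ioo (0 : ℝ) 1, (∀ t ∈ Ico 0 x, 0 < w t) → w x = 0 →
      0 ≤ fracIntegral p (derivWithin w (Icc 0 1)) x) :
    ∀ x ∈ Ico (0 : ℝ) 1, 0 < w x := by
  intro y hy
  by_contra! hwy
  obtain ⟨x, hx, hwx, hpos⟩ :=
    exists_first_zero hy.1 (h.continuousOn.mono (Icc_subset_Icc_right hy.2.le)) h0 hwy
  have hx1 : x ∈ Ioo (0 : ℝ) 1 := ⟨hx.1, hx.2.trans_lt hy.2⟩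
  exact (h.fracIntegral_derivWithin_neg hp hp1 hint hx1 hpos hwx).not_ge (hnonneg x hx1 hpos hwx)

end HasEulerDeriv

end Positivity

section InitialValueProblem

/-- The value `b u' + c u - f` that the equation prescribes for the Caputo derivative of `u`,
expressed through `w = u'` and `a = u 0`. -/
noncomputable def caputoSource (b c f : ℝ → ℝ) (a : ℝ) (w : ℝ → ℝ) : ℝ → ℝ :=
  b * w + c * ((fun _ => a) + fracIntegral 1 w) - f

/-- `w` is the derivative of the solution of the initial value problem `u 0 = a`, `u' 0 = β` for the
Caputo equation of order `k + 1`, in integrated form. -/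
structure IsVolterraSolution (k : ℝ) (b c f : ℝ → ℝ) (a β : ℝ) (w : ℝ → ℝ) : Prop where
  continuousOn : ContinuousOn w (Icc 0 1)
  eq_add_fracIntegral : ∀ x ∈ Icc (0 : ℝ) 1, w x = β + fracIntegral k (caputoSource b c f a w) x

variable {k a a₁ a₂ β β₁ β₂ : ℝ} {b c f f₁ f₂ w w₁ w₂ : ℝ → ℝ} {n : ℕ}

theorem continuousOn_caputoSource (hb : ContinuousOn b (Icc 0 1)) (hc : ContinuousOn c (Icc 0 1))
    (hf : ContinuousOn f (Icc 0 1)) (hw : ContinuousOn w (Icc 0 1)) :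
    ContinuousOn (caputoSource b c f a w) (Icc 0 1) :=
  ((hb.mul hw).add (hc.mul (continuousOn_const.add (continuousOn_fracIntegral one_pos hw)))).sub hf

protected theorem EulerContDiff.caputoSource (hb : EulerContDiff n b) (hc : EulerContDiff n c)
    (hf : EulerContDiff n f) (hw : EulerContDiff n w) :
    EulerContDiff n (caputoSource b c f a w) := by
  rw [caputoSource, sub_eq_add_neg, ← neg_one_smul ℝ f]
  exact ((hb.mul hw).add (hc.mul ((EulerContDiff.const a).add (hw.fracIntegral one_pos)))).add
    (hf.smul (-1))

theorem caputoSource_add_smul (hw₁ : ContinuousOn w₁ (Icc 0 1)) (hw₂ : ContinuousOn w₂ (Icc 0 1))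
    (r : ℝ) :
    EqOn (caputoSource b c (f₁ + r • f₂) (a₁ + r * a₂) (w₁ + r • w₂))
      (caputoSource b c f₁ a₁ w₁ + r • caputoSource b c f₂ a₂ w₂) (Icc 0 1) := fun x hx => by
  simp only [caputoSource, Pi.add_apply, Pi.sub_apply, Pi.mul_apply, Pi.smul_apply, smul_eq_mul,
    fracIntegral_add one_pos hw₁ (hw₂.const_smul r) hx, fracIntegral_smul]
  ring

theorem fracIntegral_caputoSource (hk : 0 < k) (hb : ContinuousOn b (Icc 0 1))
    (hc : ContinuousOn c (Icc 0 1)) (hf : ContinuousOn f (Icc 0 1))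
    (hw : ContinuousOn w (Icc 0 1)) :
    EqOn (fracIntegral k (caputoSource b c f a w))
      (fracIntegral k (a • c - f) + volterraOp k b c w) (Icc 0 1) := fun x hx => by
  have cJ := continuousOn_fracIntegral one_pos hw
  have split : caputoSource b c f a w = (a • c - f) + (b * w + c * fracIntegral 1 w) := by
    ext t
    simp only [caputoSource, Pi.add_apply, Pi.sub_apply, Pi.mul_apply, Pi.smul_apply, smul_eq_mul]
    ring
  rw [split, fracIntegral_add hk (by fun_prop) (by fun_prop) hx,
    fracIntegral_add hk (by fun_prop) (by fun_prop) hx]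
  rfl

theorem isVolterraSolution_iff (hk : 0 < k) (hb : ContinuousOn b (Icc 0 1))
    (hc : ContinuousOn c (Icc 0 1)) (hf : ContinuousOn f (Icc 0 1))
    (hw : ContinuousOn w (Icc 0 1)) :
    IsVolterraSolution k b c f a β w ↔
      EqOn w ((fun _ => β) + fracIntegral k (a • c - f) + volterraOp k b c w) (Icc 0 1) := by
  have rhs_eq : ∀ x ∈ Icc (0 : ℝ) 1, β + fracIntegral k (caputoSource b c f a w) x =
      ((fun _ => β : ℝ → ℝ) + fracIntegral k (a • c - f) + volterraOp k b c w) x := fun x hx => by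
    rw [fracIntegral_caputoSource hk hb hc hf hw hx]
    simp only [Pi.add_apply, add_assoc]
  exact ⟨fun h x hx => (h.eq_add_fracIntegral x hx).trans (rhs_eq x hx),
    fun h => ⟨hw, fun x hx => (h hx).trans (rhs_eq x hx).symm⟩⟩

theorem exists_isVolterraSolution (hk : 0 < k) (hb : ContinuousOn b (Icc 0 1))
    (hc : ContinuousOn c (Icc 0 1)) (hf : ContinuousOn f (Icc 0 1)) (a β : ℝ) :
    ∃ w, Continuous w ∧ IsVolterraSolution k b c f a β w := by
  obtain ⟨w, hw, heq⟩ := (bieleckiSmall_volterraOp hk hb hc).exists_eq_add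
    (continuousOn_const (c := β) |>.add
      (continuousOn_fracIntegral hk ((hc.const_smul a).sub hf)))
  exact ⟨w, hw, (isVolterraSolution_iff hk hb hc hf hw.continuousOn).2 heq⟩

namespace IsVolterraSolution

theorem apply_zero (h : IsVolterraSolution k b c f a β w) : w 0 = β := by
  rw [h.eq_add_fracIntegral 0 (left_mem_Icc.2 zero_le_one), fracIntegral_apply_zero, add_zero]

theorem add_smul (h₁ : IsVolterraSolution k b c f₁ a₁ β₁ w₁)
    (h₂ : IsVolterraSolution k b c f₂ a₂ β₂ w₂) (hk : 0 < k) (hb : ContinuousOn b (Icc 0 1))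
    (hc : ContinuousOn c (Icc 0 1)) (hf₁ : ContinuousOn f₁ (Icc 0 1))
    (hf₂ : ContinuousOn f₂ (Icc 0 1)) (r : ℝ) :
    IsVolterraSolution k b c (f₁ + r • f₂) (a₁ + r * a₂) (β₁ + r * β₂) (w₁ + r • w₂) where
  continuousOn := h₁.continuousOn.add (h₂.continuousOn.const_smul r)
  eq_add_fracIntegral x hx := by
    rw [fracIntegral_congr (caputoSource_add_smul h₁.continuousOn h₂.continuousOn r) hx,
      fracIntegral_add hk (continuousOn_caputoSource hb hc hf₁ h₁.continuousOn)
        ((continuousOn_caputoSource hb hc hf₂ h₂.continuousOn).const_smul r) hx,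
      fracIntegral_smul, Pi.add_apply, Pi.smul_apply, smul_eq_mul, h₁.eq_add_fracIntegral x hx,
      h₂.eq_add_fracIntegral x hx]
    ring

protected theorem unique (h₁ : IsVolterraSolution k b c f a β w₁)
    (h₂ : IsVolterraSolution k b c f a β w₂) (hk : 0 < k) (hb : ContinuousOn b (Icc 0 1))
    (hc : ContinuousOn c (Icc 0 1)) (hf : ContinuousOn f (Icc 0 1)) :
    EqOn w₁ w₂ (Icc 0 1) := by
  have hT := bieleckiSmall_volterraOp hk hb hc
  have sub_eq_zero : EqOn (w₁ - w₂) 0 (Icc 0 1) :=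
    hT.eqOn_zero (h₁.continuousOn.sub h₂.continuousOn) fun x hx => by
      rw [hT.map_sub h₁.continuousOn h₂.continuousOn hx, Pi.sub_apply,
        (isVolterraSolution_iff hk hb hc hf h₁.continuousOn).1 h₁ hx,
        (isVolterraSolution_iff hk hb hc hf h₂.continuousOn).1 h₂ hx]
      simp only [Pi.add_apply, Pi.sub_apply, add_sub_add_left_eq_sub]
  exact fun x hx => _root_.sub_eq_zero.1 (sub_eq_zero hx)

theorem eulerContDiff (h : IsVolterraSolution k b c f a β w) (hk : 0 < k)
    (hb : EulerContDiff n b) (hc : EulerContDiff n c) (hf : EulerContDiff n f) :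
    EulerContDiff n w := by
  have hF : EulerContDiff n (a • c - f) := by
    rw [sub_eq_add_neg, ← neg_one_smul ℝ f]
    exact (hc.smul a).add (hf.smul (-1))
  exact eulerContDiff_of_eqOn_volterraOp hk hb hc
    ((EulerContDiff.const β).add (hF.fracIntegral hk)) h.continuousOn
    ((isVolterraSolution_iff hk hb.continuousOn hc.continuousOn hf.continuousOn
      h.continuousOn).1 h)

theorem eq_add_rpow_mul (h : IsVolterraSolution k b c f a β w) (hk : 0 < k) :
    EqOn w (fun x => β + x ^ k * erdelyiKober k (caputoSource b c f a w) x) (Icc 0 1) :=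
  fun x hx => by
    rw [h.eq_add_fracIntegral x hx, fracIntegral_eq_rpow_mul_erdelyiKober hk hx.1]

theorem intervalIntegrable_derivWithin (h : IsVolterraSolution k b c f a β w) (hk : 0 < k)
    (hb : EulerContDiff 1 b) (hc : EulerContDiff 1 c) (hf : EulerContDiff 1 f) :
    IntervalIntegrable (derivWithin w (Icc 0 1)) volume 0 1 := by
  obtain ⟨z, hz, -⟩ :=
    (hb.caputoSource (a := a) hc hf (h.eulerContDiff hk hb hc hf)).erdelyiKober hk
  have integrable : IntervalIntegrable (fun t => t ^ (k - 1) *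
      (k • erdelyiKober k (caputoSource b c f a w) + z) t) volume 0 1 :=
    (intervalIntegral.intervalIntegrable_rpow' (by linarith)).mul_continuousOn <| by
      rw [uIcc_of_le zero_le_one]
      exact (hz.continuousOn.const_smul k).add hz.continuousOn_deriv
  refine integrable.congr fun t ht => ?_
  rw [uIoc_of_le zero_le_one] at ht
  have htI := Ioc_subset_Icc_self ht
  rw [derivWithin_congr (h.eq_add_rpow_mul hk) (h.eq_add_rpow_mul hk htI)]
  exact (((hz.hasDerivWithinAt_rpow_mul k ht).const_add β).derivWithin
    (uniqueDiffOn_Icc zero_lt_one t htI)).symm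

theorem fracIntegral_derivWithin (h : IsVolterraSolution k b c f a β w) (hk : 0 < k) (hk1 : k < 1)
    (hb : EulerContDiff 1 b) (hc : EulerContDiff 1 c) (hf : EulerContDiff 1 f) :
    ∀ x ∈ Ioo (0 : ℝ) 1,
      fracIntegral (1 - k) (derivWithin w (Icc 0 1)) x = caputoSource b c f a w x := by
  obtain ⟨z, hz, -⟩ := h.eulerContDiff hk hb hc hf
  refine (hz.fracIntegral_derivWithin_eq_iff (sub_pos.2 hk1) (sub_lt_self 1 hk)
    (h.intervalIntegrable_derivWithin hk hb hc hf) (continuousOn_caputoSource hb.continuousOn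
      hc.continuousOn hf.continuousOn h.continuousOn)).2 fun x hx => ?_
  rw [sub_sub_cancel, h.apply_zero]
  exact h.eq_add_fracIntegral x hx

-- At a first zero of `w` the Caputo derivative would be negative, whereas the equation makes it
-- `c u ≥ 0`.
theorem pos (h : IsVolterraSolution k b c 0 a β w) (hk : 0 < k) (hk1 : k < 1)
    (hb : EulerContDiff 1 b) (hc : EulerContDiff 1 c) (hc0 : ∀ x ∈ Icc (0 : ℝ) 1, 0 ≤ c x)
    (ha : 0 ≤ a) (hβ : 0 < β) : ∀ x ∈ Ico (0 : ℝ) 1, 0 < w x := by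
  have hf : EulerContDiff 1 0 := EulerContDiff.const 0
  obtain ⟨z, hz, -⟩ := h.eulerContDiff hk hb hc hf
  refine hz.pos_of_fracIntegral_derivWithin_nonneg (sub_pos.2 hk1) (sub_lt_self 1 hk)
    (h.intervalIntegrable_derivWithin hk hb hc hf) (h.apply_zero ▸ hβ) fun x hx hpos hwx => ?_
  have integral_nonneg : 0 ≤ fracIntegral 1 w x := by
    rw [fracIntegral_one]
    refine intervalIntegral.integral_nonneg hx.1.le fun t ht => ?_
    rcases ht.2.eq_or_lt with rfl | htx
    exacts [hwx.ge, (hpos t ⟨ht.1, htx⟩).le]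
  rw [h.fracIntegral_derivWithin hk hk1 hb hc hf x hx]
  simpa [caputoSource, hwx] using
    mul_nonneg (hc0 x (Ioo_subset_Icc_self hx)) (add_nonneg ha integral_nonneg)

end IsVolterraSolution

end InitialValueProblem

section Shooting

variable {k a a₁ a₂ r α₀ α₁ β γ₀ γ₁ : ℝ} {b c f p w w₁ w₂ : ℝ → ℝ}

/-- The value `u 1 + α₁ u' 1` at the right end point, expressed through `w = u'` and `a = u 0`. -/
noncomputable def robinValue (α₁ a : ℝ) (w : ℝ → ℝ) : ℝ :=
  a + fracIntegral 1 w 1 + α₁ * w 1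

/-- `w` is the derivative of a solution of the boundary value problem `u 0 - α₀ u' 0 = γ₀`,
`u 1 + α₁ u' 1 = γ₁` for the Caputo equation of order `k + 1`, in integrated form; the left boundary
condition is absorbed by the initial value `u 0 = γ₀ + α₀ u' 0`. -/
structure IsRobinSolution (k : ℝ) (b c f : ℝ → ℝ) (α₀ α₁ γ₀ γ₁ : ℝ) (w : ℝ → ℝ) : Prop extends
    IsVolterraSolution k b c f (γ₀ + α₀ * w 0) (w 0) w where
  robinValue_eq : robinValue α₁ (γ₀ + α₀ * w 0) w = γ₁

theorem robinValue_add_smul (hw₁ : ContinuousOn w₁ (Icc 0 1)) (hw₂ : ContinuousOn w₂ (Icc 0 1)) :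
    robinValue α₁ (a₁ + r * a₂) (w₁ + r • w₂) =
      robinValue α₁ a₁ w₁ + r * robinValue α₁ a₂ w₂ := by
  simp only [robinValue, Pi.add_apply, Pi.smul_apply, smul_eq_mul, fracIntegral_smul,
    fracIntegral_add one_pos hw₁ (hw₂.const_smul r) (right_mem_Icc.2 zero_le_one)]
  ring

theorem robinValue_pos (hα₁ : 0 ≤ α₁) (ha : 0 ≤ a) (hw : ContinuousOn w (Icc 0 1))
    (hpos : ∀ x ∈ Ico (0 : ℝ) 1, 0 < w x) : 0 < robinValue α₁ a w := by
  have integral_pos : 0 < fracIntegral 1 w 1 := by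
    rw [fracIntegral_one]
    exact intervalIntegral.intervalIntegral_pos_of_pos_on
      (hw.intervalIntegrable_of_Icc zero_le_one) (fun x hx => hpos x ⟨hx.1.le, hx.2⟩) one_pos
  have endpoint_nonneg : 0 ≤ w 1 := by
    rw [← closure_Ico zero_ne_one] at hw
    refine le_on_closure (fun x hx => (hpos x hx).le) continuousOn_const hw ?_
    rw [closure_Ico zero_ne_one]
    exact right_mem_Icc.2 zero_le_one
  unfold robinValue
  positivity

theorem IsVolterraSolution.add_smul_fundamental (h : IsVolterraSolution k b c f a β w)
    (hp : IsVolterraSolution k b c 0 α₀ 1 p) (hk : 0 < k) (hb : ContinuousOn b (Icc 0 1))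
    (hc : ContinuousOn c (Icc 0 1)) (hf : ContinuousOn f (Icc 0 1)) (r : ℝ) :
    IsVolterraSolution k b c f (a + r * α₀) (β + r) (w + r • p) := by
  simpa using h.add_smul hp hk hb hc hf continuousOn_const r

theorem exists_fundamental_robinValue_pos (hk : 0 < k) (hk1 : k < 1) (hb : EulerContDiff 1 b)
    (hc : EulerContDiff 1 c) (hc0 : ∀ x ∈ Icc (0 : ℝ) 1, 0 ≤ c x) (hα₀ : 0 ≤ α₀) (hα₁ : 0 ≤ α₁) :
    ∃ p, Continuous p ∧ IsVolterraSolution k b c 0 α₀ 1 p ∧ 0 < robinValue α₁ α₀ p := by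
  obtain ⟨p, cp, hp⟩ := exists_isVolterraSolution hk hb.continuousOn hc.continuousOn
    (continuousOn_const (c := (0 : ℝ))) α₀ 1
  exact ⟨p, cp, hp, robinValue_pos hα₁ hα₀ cp.continuousOn
    (hp.pos hk hk1 hb hc hc0 hα₀ one_pos)⟩

theorem exists_isRobinSolution (hk : 0 < k) (hk1 : k < 1) (hb : EulerContDiff 1 b)
    (hc : EulerContDiff 1 c) (hf : ContinuousOn f (Icc 0 1)) (hc0 : ∀ x ∈ Icc (0 : ℝ) 1, 0 ≤ c x)
    (hα₀ : 0 ≤ α₀) (hα₁ : 0 ≤ α₁) (γ₀ γ₁ : ℝ) :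
    ∃ w, Continuous w ∧ IsRobinSolution k b c f α₀ α₁ γ₀ γ₁ w := by
  obtain ⟨p, cp, hp, hpos⟩ := exists_fundamental_robinValue_pos hk hk1 hb hc hc0 hα₀ hα₁
  obtain ⟨w, cw, hw⟩ :=
    exists_isVolterraSolution hk hb.continuousOn hc.continuousOn hf γ₀ 0
  set r := (γ₁ - robinValue α₁ γ₀ w) / robinValue α₁ α₀ p with hr
  have sol := hw.add_smul_fundamental hp hk hb.continuousOn hc.continuousOn hf r
  rw [zero_add] at sol
  have apply_zero : (w + r • p) 0 = r := sol.apply_zero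
  refine ⟨w + r • p, cw.add (cp.const_smul r), ⟨?_, ?_⟩⟩
  · rwa [apply_zero, mul_comm]
  · rw [apply_zero, mul_comm, robinValue_add_smul cw.continuousOn cp.continuousOn, hr,
      div_mul_cancel₀ _ hpos.ne', add_sub_cancel]

protected theorem IsRobinSolution.unique (h₁ : IsRobinSolution k b c f α₀ α₁ γ₀ γ₁ w₁)
    (h₂ : IsRobinSolution k b c f α₀ α₁ γ₀ γ₁ w₂) (hk : 0 < k) (hk1 : k < 1)
    (hb : EulerContDiff 1 b) (hc : EulerContDiff 1 c) (hf : ContinuousOn f (Icc 0 1))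
    (hc0 : ∀ x ∈ Icc (0 : ℝ) 1, 0 ≤ c x) (hα₀ : 0 ≤ α₀) (hα₁ : 0 ≤ α₁) :
    EqOn w₁ w₂ (Icc 0 1) := by
  obtain ⟨p, cp, hp, hpos⟩ := exists_fundamental_robinValue_pos hk hk1 hb hc hc0 hα₀ hα₁
  set r := w₁ 0 - w₂ 0 with hr
  have init_eq : γ₀ + α₀ * w₁ 0 = γ₀ + α₀ * w₂ 0 + r * α₀ := by rw [hr]; ring
  have eqOn : EqOn w₁ (w₂ + r • p) (Icc 0 1) := by
    refine h₁.toIsVolterraSolution.unique ?_ hk hb.continuousOn hc.continuousOn hf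
    rw [init_eq, ← add_sub_cancel (w₂ 0) (w₁ 0)]
    exact h₂.add_smul_fundamental hp hk hb.continuousOn hc.continuousOn hf r
  have r_mul_eq_zero : r * robinValue α₁ α₀ p = 0 := by
    have value := h₁.robinValue_eq
    rw [init_eq, robinValue, fracIntegral_congr eqOn (right_mem_Icc.2 zero_le_one),
      eqOn (right_mem_Icc.2 zero_le_one), ← robinValue,
      robinValue_add_smul h₂.continuousOn cp.continuousOn, h₂.robinValue_eq] at value
    linarith
  have r_eq_zero := (mul_eq_zero.1 r_mul_eq_zero).resolve_right hpos.ne'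
  simpa [r_eq_zero] using eqOn

end Shooting

section Regularity

variable {k a β δ : ℝ} {b c f u w : ℝ → ℝ} {n q : ℕ}

namespace IsVolterraSolution

theorem contDiffOn (h : IsVolterraSolution k b c f a β w) (hk : 0 < k)
    (hb : EulerContDiff n b) (hc : EulerContDiff n c) (hf : EulerContDiff n f) :
    ContDiffOn ℝ n w (Ioc 0 1) := by
  have smooth := ((hb.caputoSource (a := a) hc hf
    (h.eulerContDiff hk hb hc hf)).erdelyiKober hk).contDiffOn_rpow_mul k
  exact (contDiffOn_const.add smooth).congr ((h.eq_add_rpow_mul hk).mono Ioc_subset_Icc_self)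

theorem exists_abs_iteratedDerivWithin_le (h : IsVolterraSolution k b c f a β w) (hk : 0 < k)
    (hb : EulerContDiff n b) (hc : EulerContDiff n c) (hf : EulerContDiff n f) (hn : 0 < n) :
    ∃ C, ∀ x ∈ Ioc (0 : ℝ) 1, |iteratedDerivWithin n w (Ioc 0 1) x| ≤ C * x ^ (k - n) := by
  obtain ⟨C, hC⟩ := ((hb.caputoSource (a := a) hc hf
    (h.eulerContDiff hk hb hc hf)).erdelyiKober hk).exists_abs_iteratedDerivWithin_rpow_mul_le k
  refine ⟨C, fun x hx => ?_⟩
  rw [iteratedDerivWithin_congr ((h.eq_add_rpow_mul hk).mono Ioc_subset_Icc_self) hx,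
    iteratedDerivWithin_const_add hn]
  exact hC x hx

theorem exists_forall_abs_iteratedDerivWithin_le (h : IsVolterraSolution k b c f a β w)
    (hk : 0 < k) (hb : EulerContDiff n b) (hc : EulerContDiff n c) (hf : EulerContDiff n f) :
    ∃ C, ∀ i, 0 < i → i ≤ n → ∀ x ∈ Ioc (0 : ℝ) 1,
      |iteratedDerivWithin i w (Ioc 0 1) x| ≤ C * x ^ (k - i) := by
  have bound : ∀ i, ∃ C, 0 < i → i ≤ n → ∀ x ∈ Ioc (0 : ℝ) 1,
      |iteratedDerivWithin i w (Ioc 0 1) x| ≤ C * x ^ (k - i) := fun i => by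
    by_cases hi : 0 < i ∧ i ≤ n
    · obtain ⟨C, hC⟩ := h.exists_abs_iteratedDerivWithin_le hk (hb.of_le hi.2) (hc.of_le hi.2)
        (hf.of_le hi.2) hi.1
      exact ⟨C, fun _ _ => hC⟩
    · exact ⟨0, fun h0 hn => (hi ⟨h0, hn⟩).elim⟩
  choose C hC using bound
  obtain ⟨M, hM⟩ := ((Finset.range (n + 1)).image C).bddAbove
  refine ⟨M, fun i h0 hi x hx => (hC i h0 hi x hx).trans ?_⟩
  exact mul_le_mul_of_nonneg_right
    (hM (Finset.mem_image_of_mem C (Finset.mem_range_succ_iff.2 hi))) (rpow_nonneg hx.1.le _)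

end IsVolterraSolution

theorem hasDerivAt_const_add_fracIntegral_one (hw : Continuous w) (a x : ℝ) :
    HasDerivAt (fun x => a + fracIntegral 1 w x) (w x) x := by
  simp only [fracIntegral_one]
  exact (hw.integral_hasStrictDerivAt 0 x).hasDerivAt.const_add a

theorem eqOn_derivWithin_of_hasDerivAt {s : Set ℝ} (hu : ∀ x, HasDerivAt u (w x) x)
    (hs : UniqueDiffOn ℝ s) : EqOn (derivWithin u s) w s := fun x hx =>
  (hu x).hasDerivWithinAt.derivWithin (hs x hx)

theorem contDiffOn_succ_of_hasDerivAt {s : Set ℝ} (hu : ∀ x, HasDerivAt u (w x) x)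
    (hs : UniqueDiffOn ℝ s) (hw : ContDiffOn ℝ n w s) : ContDiffOn ℝ (n + 1) u s := by
  rw [contDiffOn_succ_iff_derivWithin hs]
  exact ⟨fun x _ => (hu x).differentiableAt.differentiableWithinAt, by simp,
    hw.congr (eqOn_derivWithin_of_hasDerivAt hu hs)⟩

theorem iteratedDerivWithin_succ_of_hasDerivAt {s : Set ℝ} (hu : ∀ x, HasDerivAt u (w x) x)
    (hs : UniqueDiffOn ℝ s) (i : ℕ) :
    EqOn (iteratedDerivWithin (i + 1) u s) (iteratedDerivWithin i w s) s := fun x hx => by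
  rw [iteratedDerivWithin_succ',
    iteratedDerivWithin_congr (eqOn_derivWithin_of_hasDerivAt hu hs) hx]

theorem IsVolterraSolution.exists_abs_iteratedDerivWithin_primitive_le
    (h : IsVolterraSolution (δ - 1) b c f a β w) (hδ : 1 < δ) (hb : EulerContDiff q b)
    (hc : EulerContDiff q c) (hf : EulerContDiff q f) (hu : ∀ x, HasDerivAt u (w x) x) :
    ∃ C, ∀ x ∈ Ioc (0 : ℝ) 1,
      (∀ i : ℕ, i ≤ 1 → |iteratedDerivWithin i u (Icc 0 1) x| ≤ C) ∧
      (∀ i : ℕ, 2 ≤ i → i ≤ q + 1 →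
        |iteratedDerivWithin i u (Icc 0 1) x| ≤ C * x ^ (δ - i)) := by
  have cu : ContinuousOn u (Icc 0 1) := fun x _ => (hu x).continuousAt.continuousWithinAt
  obtain ⟨C₀, hC₀⟩ := isCompact_Icc.exists_bound_of_continuousOn cu
  obtain ⟨C₁, hC₁⟩ := isCompact_Icc.exists_bound_of_continuousOn h.continuousOn
  obtain ⟨C₂, hC₂⟩ := h.exists_forall_abs_iteratedDerivWithin_le (sub_pos.2 hδ) hb hc hf
  refine ⟨max C₀ (max C₁ C₂), fun x hx => ?_⟩
  have hxI := Ioc_subset_Icc_self hx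
  have succ := iteratedDerivWithin_succ_of_hasDerivAt hu (uniqueDiffOn_Icc (zero_lt_one' ℝ))
  refine ⟨fun i hi => ?_, fun i hi hiq => ?_⟩
  · interval_cases i
    · rw [iteratedDerivWithin_zero]
      exact (hC₀ x hxI).trans (le_max_left _ _)
    · rw [succ 0 hxI, iteratedDerivWithin_zero]
      exact (hC₁ x hxI).trans ((le_max_left _ _).trans (le_max_right _ _))
  · obtain ⟨i, rfl⟩ : ∃ j, i = j + 1 := ⟨i - 1, by lia⟩
    rw [succ i hxI, iteratedDerivWithin_Icc_eq_Ioc i hx, Nat.cast_succ, add_comm (i : ℝ), ← sub_sub]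
    refine (hC₂ i (by lia) (by lia) x hx).trans ?_
    exact mul_le_mul_of_nonneg_right ((le_max_right _ _).trans (le_max_right _ _))
      (rpow_nonneg hx.1.le _)

end Regularity

section Reduction

variable {k a x β δ θ C α₀ α₁ γ₀ γ₁ : ℝ} {b c f g w : ℝ → ℝ}

theorem caputoW_eq_fracIntegral :
    caputoW δ g x = fracIntegral (2 - δ) (derivWithin (derivWithin g (Icc 0 1)) (Icc 0 1)) x := by
  rw [caputoW, fracIntegral, show 2 - δ - 1 = 1 - δ by ring]

theorem caputo_equation_iff (hw : EqOn (derivWithin g (Icc 0 1)) w (Icc 0 1))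
    (hg : EqOn g (fun x => a + fracIntegral 1 w x) (Icc 0 1)) (hx : x ∈ Icc (0 : ℝ) 1) :
    -caputoW δ g x + b x * derivWithin g (Icc 0 1) x + c x * g x = f x ↔
      fracIntegral (2 - δ) (derivWithin w (Icc 0 1)) x = caputoSource b c f a w x := by
  rw [caputoW_eq_fracIntegral,
    fracIntegral_congr (fun t ht => derivWithin_congr hw (hw ht)) hx, hw hx, hg hx]
  simp only [caputoSource, Pi.add_apply, Pi.sub_apply, Pi.mul_apply]
  constructor <;> intro h <;> linarith

theorem eqOn_add_fracIntegral_one_derivWithin (hg : ContDiffOn ℝ 1 g (Icc 0 1)) :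
    EqOn g (fun x => g 0 + fracIntegral 1 (derivWithin g (Icc 0 1)) x) (Icc 0 1) := fun x hx => by
  have subset : Icc 0 x ⊆ Icc (0 : ℝ) 1 := Icc_subset_Icc_right hx.2
  have ftc := intervalIntegral.integral_eq_sub_of_hasDerivAt_of_le hx.1
    (hg.continuousOn.mono subset)
    (fun t ht => ((hg.differentiableOn one_ne_zero t
      (subset (Ioo_subset_Icc_self ht))).hasDerivWithinAt).hasDerivAt
        (Icc_mem_nhds ht.1 (ht.2.trans_le hx.2)))
    (((hg.continuousOn_derivWithin (uniqueDiffOn_Icc zero_lt_one) le_rfl).mono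
      subset).intervalIntegrable_of_Icc hx.1)
  simp only [fracIntegral_one, ftc, add_sub_cancel]

theorem contDiffOn_derivWithin_Icc {n : ℕ} (hg : ContDiffOn ℝ (n + 1) g (Ioc 0 1)) :
    ContDiffOn ℝ n (derivWithin g (Icc 0 1)) (Ioc 0 1) :=
  (hg.derivWithin (uniqueDiffOn_Ioc 0 1) le_rfl).congr fun x hx => by
    simpa only [iteratedDerivWithin_one] using iteratedDerivWithin_Icc_eq_Ioc (y := g) 1 hx

theorem cqNu_one_of_abs_derivWithin_le (hw : ContinuousOn w (Icc 0 1))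
    (hw1 : ContDiffOn ℝ 1 w (Ioc 0 1)) (hθ : 0 < θ)
    (hC : ∀ x ∈ Ioc (0 : ℝ) 1, |derivWithin w (Icc 0 1) x| ≤ C * x ^ (-θ)) : CqNu 1 θ w := by
  refine ⟨hw, hw1, C, fun i hi hi1 x hx => ?_⟩
  obtain rfl : i = 1 := le_antisymm hi1 hi
  rw [iteratedDerivWithin_one, Nat.cast_one, sub_right_comm, sub_self, zero_sub]
  exact ⟨fun h => by linarith, fun h => by linarith, fun _ => hC x hx⟩

theorem intervalIntegrable_derivWithin_of_abs_le (hw : ContDiffOn ℝ 1 w (Ioc 0 1)) (hθ : θ < 1)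
    (hC : ∀ x ∈ Ioc (0 : ℝ) 1, |derivWithin w (Icc 0 1) x| ≤ C * x ^ (-θ)) :
    IntervalIntegrable (derivWithin w (Icc 0 1)) volume 0 1 := by
  have cont : ContinuousOn (derivWithin w (Icc 0 1)) (Ioc 0 1) :=
    (contDiffOn_derivWithin_Icc (n := 0) (by simpa using hw)).continuousOn
  have dominating : IntervalIntegrable (fun x : ℝ => C * x ^ (-θ)) volume 0 1 :=
    (intervalIntegral.intervalIntegrable_rpow' (by linarith)).const_mul C
  refine dominating.mono_fun' ?_ ?_
  · rw [uIoc_of_le zero_le_one]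
    exact cont.aestronglyMeasurable measurableSet_Ioc
  · rw [uIoc_of_le zero_le_one]
    exact (ae_restrict_mem measurableSet_Ioc).mono hC

theorem isVolterraSolution_of_caputo_equation (hδ1 : 1 < δ) (hδ2 : δ < 2)
    (hb : ContinuousOn b (Icc 0 1)) (hc : ContinuousOn c (Icc 0 1)) (hf : ContinuousOn f (Icc 0 1))
    (hg1 : ContDiffOn ℝ 1 g (Icc 0 1)) (hg2 : ContDiffOn ℝ 2 g (Ioc 0 1)) (hθ : θ ∈ Ioo (0 : ℝ) 1)
    (hC : ∀ x ∈ Ioc (0 : ℝ) 1,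
      |derivWithin (derivWithin g (Icc 0 1)) (Icc 0 1) x| ≤ C * x ^ (-θ))
    (heq : ∀ x ∈ Ioo (0 : ℝ) 1,
      -caputoW δ g x + b x * derivWithin g (Icc 0 1) x + c x * g x = f x) :
    IsVolterraSolution (δ - 1) b c f (g 0) (derivWithin g (Icc 0 1) 0)
      (derivWithin g (Icc 0 1)) := by
  have cw := hg1.continuousOn_derivWithin (uniqueDiffOn_Icc zero_lt_one) le_rfl
  have hw1 : ContDiffOn ℝ 1 (derivWithin g (Icc 0 1)) (Ioc 0 1) :=
    contDiffOn_derivWithin_Icc (n := 1) (by simpa [one_add_one_eq_two] using hg2)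
  obtain ⟨z, hz, -⟩ := (cqNu_one_of_abs_derivWithin_le cw hw1 hθ.1 hC).eulerContDiff hθ.2
  refine ⟨cw, ?_⟩
  rw [show δ - 1 = 1 - (2 - δ) by ring]
  refine (hz.fracIntegral_derivWithin_eq_iff (by linarith) (by linarith)
    (intervalIntegrable_derivWithin_of_abs_le hw1 hθ.2 hC)
    (continuousOn_caputoSource hb hc hf cw)).1 fun x hx => ?_
  exact (caputo_equation_iff (fun _ _ => rfl) (eqOn_add_fracIntegral_one_derivWithin hg1)
    (Ioo_subset_Icc_self hx)).1 (heq x hx)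

theorem IsVolterraSolution.isRobinSolution (h : IsVolterraSolution k b c f (g 0) (w 0) w)
    (hg : EqOn g (fun x => g 0 + fracIntegral 1 w x) (Icc 0 1)) (h0 : g 0 - α₀ * w 0 = γ₀)
    (h1 : g 1 + α₁ * w 1 = γ₁) : IsRobinSolution k b c f α₀ α₁ γ₀ γ₁ w := by
  have init_eq : g 0 = γ₀ + α₀ * w 0 := sub_eq_iff_eq_add.1 h0
  rw [hg (right_mem_Icc.2 zero_le_one)] at h1
  exact ⟨init_eq ▸ h, init_eq ▸ h1⟩

theorem IsVolterraSolution.caputo_equation (h : IsVolterraSolution (δ - 1) b c f a β w)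
    (hδ1 : 1 < δ) (hδ2 : δ < 2) (hb : EulerContDiff 1 b) (hc : EulerContDiff 1 c)
    (hf : EulerContDiff 1 f) (hw : EqOn (derivWithin g (Icc 0 1)) w (Icc 0 1))
    (hg : EqOn g (fun x => a + fracIntegral 1 w x) (Icc 0 1)) (hx : x ∈ Ioo (0 : ℝ) 1) :
    -caputoW δ g x + b x * derivWithin g (Icc 0 1) x + c x * g x = f x := by
  rw [caputo_equation_iff hw hg (Ioo_subset_Icc_self hx), show 2 - δ = 1 - (δ - 1) by ring]
  exact h.fracIntegral_derivWithin (sub_pos.2 hδ1) (by linarith) hb hc hf x hx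

end Reduction

theorem stmt10_general (δ : ℝ) (hδ1 : 1 < δ) (hδ2 : δ < 2)
    (q : ℕ) (hq : 1 ≤ q) (b c f : ℝ → ℝ)
    (hb : EulerContDiff q b) (hc : EulerContDiff q c) (hf : EulerContDiff q f)
    (hc0 : ∀ x ∈ Icc (0 : ℝ) 1, 0 ≤ c x)
    (α₀ α₁ γ₀ γ₁ : ℝ) (hα₀ : 0 ≤ α₀) (hα₁ : 0 ≤ α₁) :
    ∃ u : ℝ → ℝ,
      ContDiffOn ℝ 1 u (Icc 0 1) ∧
      ContDiffOn ℝ (q + 1) u (Ioc 0 1) ∧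
      (∀ x ∈ Ioo (0 : ℝ) 1,
        -caputoW δ u x + b x * derivWithin u (Icc 0 1) x + c x * u x = f x) ∧
      (u 0 - α₀ * derivWithin u (Icc 0 1) 0 = γ₀) ∧
      (u 1 + α₁ * derivWithin u (Icc 0 1) 1 = γ₁) ∧
      (∃ C : ℝ, ∀ x ∈ Ioc (0 : ℝ) 1,
        (∀ i : ℕ, i ≤ 1 → |iteratedDerivWithin i u (Icc 0 1) x| ≤ C) ∧
        (∀ i : ℕ, 2 ≤ i → i ≤ q + 1 →
          |iteratedDerivWithin i u (Icc 0 1) x| ≤ C * x ^ (δ - i))) ∧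
      (∀ g : ℝ → ℝ, ContDiffOn ℝ 1 g (Icc 0 1) → ContDiffOn ℝ 2 g (Ioc 0 1) →
        (∃ C' > (0 : ℝ), ∃ θ ∈ Ioo (0 : ℝ) 1, ∀ x ∈ Ioc (0 : ℝ) 1,
          |derivWithin (derivWithin g (Icc 0 1)) (Icc 0 1) x| ≤ C' * x ^ (-θ)) →
        (∀ x ∈ Ioo (0 : ℝ) 1,
          -caputoW δ g x + b x * derivWithin g (Icc 0 1) x + c x * g x = f x) →
        (g 0 - α₀ * derivWithin g (Icc 0 1) 0 = γ₀) →
        (g 1 + α₁ * derivWithin g (Icc 0 1) 1 = γ₁) →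
        ∀ x ∈ Icc (0 : ℝ) 1, g x = u x) := by
  have hk : 0 < δ - 1 := sub_pos.2 hδ1
  have hk1 : δ - 1 < 1 := by linarith
  have hb1 := hb.of_le hq
  have hc1 := hc.of_le hq
  have cf := hf.continuousOn
  obtain ⟨w, cw, hw⟩ := exists_isRobinSolution hk hk1 hb1 hc1 cf hc0 hα₀ hα₁ γ₀ γ₁
  have hu := hasDerivAt_const_add_fracIntegral_one cw (γ₀ + α₀ * w 0)
  have du := eqOn_derivWithin_of_hasDerivAt hu (uniqueDiffOn_Icc zero_lt_one)
  refine ⟨_, ?_, contDiffOn_succ_of_hasDerivAt hu (uniqueDiffOn_Ioc 0 1)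
      (hw.contDiffOn hk hb hc hf), fun x hx => ?_, ?_, ?_,
    hw.exists_abs_iteratedDerivWithin_primitive_le hδ1 hb hc hf hu, ?_⟩
  · simpa using contDiffOn_succ_of_hasDerivAt (n := 0) hu (uniqueDiffOn_Icc zero_lt_one)
      (contDiffOn_zero.2 cw.continuousOn)
  · exact hw.caputo_equation hδ1 hδ2 hb1 hc1 (hf.of_le hq) du (fun _ _ => rfl) hx
  · rw [du (left_mem_Icc.2 zero_le_one), fracIntegral_apply_zero, add_zero, add_sub_cancel_right]
  · rw [du (right_mem_Icc.2 zero_le_one)]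
    exact hw.robinValue_eq
  · rintro g hg1 hg2 ⟨C, -, θ, hθ, hC⟩ heq hleft hright x hx
    have g_eq := eqOn_add_fracIntegral_one_derivWithin hg1
    have hg := (isVolterraSolution_of_caputo_equation hδ1 hδ2 hb1.continuousOn
      hc1.continuousOn cf hg1 hg2 hθ hC heq).isRobinSolution g_eq hleft hright
    have dg := hg.unique hw hk hk1 hb1 hc1 cf hc0 hα₀ hα₁
    refine (g_eq hx).trans ?_
    simp only [fracIntegral_congr dg hx, sub_eq_iff_eq_add.1 hleft,
      dg (left_mem_Icc.2 zero_le_one)]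

theorem stmt10 (δ : ℝ) (hδ1 : 1 < δ) (hδ2 : δ < 2)
    (q : ℕ) (hq : 2 ≤ q) (μ : ℝ) (hμ : μ ≤ 2 - δ)
    (b c f : ℝ → ℝ) (hb : CqNu q μ b) (hc : CqNu q μ c) (hf : CqNu q μ f)
    (hc0 : ∀ x ∈ Set.Icc (0:ℝ) 1, 0 ≤ c x)
    (α₀ α₁ γ₀ γ₁ : ℝ) (hα₀ : 1 / (δ - 1) ≤ α₀) (hα₁ : 0 ≤ α₁) :
    ∃ u : ℝ → ℝ,
      ContDiffOn ℝ 1 u (Set.Icc 0 1) ∧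
      ContDiffOn ℝ (q + 1) u (Set.Ioc 0 1) ∧
      (∀ x ∈ Set.Ioo (0:ℝ) 1,
        -caputoW δ u x + b x * derivWithin u (Set.Icc 0 1) x + c x * u x = f x) ∧
      (u 0 - α₀ * derivWithin u (Set.Icc 0 1) 0 = γ₀) ∧
      (u 1 + α₁ * derivWithin u (Set.Icc 0 1) 1 = γ₁) ∧
      (∃ C : ℝ, ∀ x ∈ Set.Ioc (0:ℝ) 1,
        (∀ i : ℕ, i ≤ 1 → |iteratedDerivWithin i u (Set.Icc 0 1) x| ≤ C) ∧
        (∀ i : ℕ, 2 ≤ i → i ≤ q + 1 →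
          |iteratedDerivWithin i u (Set.Icc 0 1) x| ≤ C * x ^ (δ - i))) ∧
      (∀ g : ℝ → ℝ, ContDiffOn ℝ 1 g (Set.Icc 0 1) → ContDiffOn ℝ 2 g (Set.Ioc 0 1) →
        (∃ C' > (0:ℝ), ∃ θ ∈ Set.Ioo (0:ℝ) 1, ∀ x ∈ Set.Ioc (0:ℝ) 1,
          |derivWithin (derivWithin g (Set.Icc 0 1)) (Set.Icc 0 1) x| ≤ C' * x ^ (-θ)) →
        (∀ x ∈ Set.Ioo (0:ℝ) 1,
          -caputoW δ g x + b x * derivWithin g (Set.Icc 0 1) x + c x * g x = f x) →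
        (g 0 - α₀ * derivWithin g (Set.Icc 0 1) 0 = γ₀) →
        (g 1 + α₁ * derivWithin g (Set.Icc 0 1) 1 = γ₁) →
        ∀ x ∈ Set.Icc (0:ℝ) 1, g x = u x) := by
  have hμ1 : μ < 1 := by linarith
  exact stmt10_general δ hδ1 hδ2 q (one_le_two.trans hq) b c f (hb.eulerContDiff hμ1)
    (hc.eulerContDiff hμ1) (hf.eulerContDiff hμ1) hc0 α₀ α₁ γ₀ γ₁
    ((one_div_pos.2 (sub_pos.2 hδ1)).le.trans hα₀) hα₁
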